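/- arXiv:2408.15592 — 5 statements merged into one kernel-verified Lean document; each statement's English description precedes it below -/
import Mathlib

section
/- Let C be an [n,k] rank metric code with n ≥ k ≥ 1, G a generator matrix of C, U the F-span of the columns of G in the space of column vectors E^{[k]}, and let r ∈ {1,…,k−1}. Then the following are equivalent: (1) all E-subspaces D of C with dim_E(D) = r have the same rank support weight; (2) U = E^{[k]}; (3) wt(C) = dim_F(C) = mk. -/
open Submodule Pointwise

/-- The coordinatewise inclusion of `F^n` into `E^n`. -/
noncomputable def fIncl (F E : Type*) [Field F] [Field E] [Algebra F E] (n : ℕ) :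
    (Fin n → F) →ₗ[F] (Fin n → E) :=
  LinearMap.compLeft (Algebra.linearMap F E) (Fin n)

/-- The rank support `χ(A)` of `A ⊆ E^n`: the smallest `F`-subspace `U` of `F^n`
such that `A` is contained in the `E`-span of (the image in `E^n` of) `U`. -/
noncomputable def rankSupport (F E : Type*) [Field F] [Field E] [Algebra F E] (n : ℕ)
    (A : Set (Fin n → E)) : Submodule F (Fin n → F) :=
  sInf {U : Submodule F (Fin n → F) |
    A ⊆ (Submodule.span E (fIncl F E n '' (U : Set (Fin n → F))) : Set (Fin n → E))}

/-- The rank support weight `wt(A) = dim_F χ(A)`. -/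
noncomputable def wt (F E : Type*) [Field F] [Field E] [Algebra F E] (n : ℕ)
    (A : Set (Fin n → E)) : ℕ :=
  Module.finrank F (rankSupport F E n A)

theorem aux_finrank_map {K A B : Type*} [Field K] [AddCommGroup A] [Module K A]
    [AddCommGroup B] [Module K B] {g : A →ₗ[K] B} (p : Submodule K A)
    (hg : Function.Injective g) : Module.finrank K (p.map g) = Module.finrank K p :=
  (Submodule.equivMapOfInjective g hg p).finrank_eq.symm

theorem aux_ncard {K A : Type*} [Field K] [AddCommGroup A] [Module K A] [FiniteDimensional K A]
    {s : Set A} (hs : LinearIndepOn K id s) :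
    Module.finrank K (Submodule.span K s) = s.ncard := by
  have := hs.setFinite.fintype
  rw [finrank_span_set_eq_card hs, Set.ncard_eq_toFinset_card']

theorem aux_pencil {F U E : Type*} [Field F] [Infinite F] [AddCommGroup U] [Module F U]
    [AddCommGroup E] [Module F E] [FiniteDimensional F E]
    (f g : U →ₗ[F] E) (v : U) (hv : f v = 0) (hb : g v ∉ LinearMap.range f) :
    ∃ t : F, t ≠ 0 ∧ Module.finrank F (LinearMap.range f) <
      Module.finrank F (LinearMap.range (f + t • g)) := by
  classical
  obtain ⟨σ, hσ⟩ := f.rangeRestrict.exists_rightInverse_of_surjective f.range_rangeRestrict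
  have hσ' : ∀ y : LinearMap.range f, f (σ y) = y := fun y =>
    congrArg Subtype.val (LinearMap.congr_fun hσ y)
  let J : (LinearMap.range f × F) →ₗ[F] E :=
    LinearMap.coprod (LinearMap.range f).subtype (LinearMap.toSpanSingleton F E (g v))
  have hJ : LinearMap.ker J = ⊥ := by
    rw [LinearMap.ker_eq_bot']
    rintro ⟨y, s⟩ h
    have h' : (y : E) + s • g v = 0 := by simpa [J] using h
    have hs : s = 0 := by
      by_contra hs
      apply hb
      have : g v = s⁻¹ • (-(y : E)) := by
        rw [eq_inv_smul_iff₀ hs]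
        exact eq_neg_of_add_eq_zero_right h'
      rw [this]
      exact Submodule.smul_mem _ _ (Submodule.neg_mem _ y.2)
    subst hs
    have : y = 0 := by ext; simpa using h'
    simp [this]
  obtain ⟨π, hπ⟩ := J.exists_leftInverse_of_injective hJ
  let N : Module.End F (LinearMap.range f × F) :=
    π ∘ₗ g ∘ₗ σ ∘ₗ LinearMap.fst F (LinearMap.range f) F
  have hfin : ({μ : F | N.HasEigenvalue μ} ∪ {0}).Finite :=
    (Module.End.finite_hasEigenvalue N).union (Set.finite_singleton 0)
  obtain ⟨μ, hμ⟩ := hfin.exists_notMem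
  simp only [Set.mem_union, Set.mem_ofPred_eq, Set.mem_singleton_iff, not_or] at hμ
  obtain ⟨hμ1, hμ0⟩ := hμ
  refine ⟨-μ⁻¹, by simpa using hμ0, ?_⟩
  set t : F := -μ⁻¹ with ht
  have ht0 : t ≠ 0 := by simpa [ht] using hμ0
  let φ : (LinearMap.range f × F) →ₗ[F] U :=
    LinearMap.coprod σ (t⁻¹ • LinearMap.toSpanSingleton F U v)
  have hcomp : ∀ q, π ((f + t • g) (φ q)) = q + t • N q := by
    rintro ⟨y, s⟩
    have h1 : (f + t • g) (φ (y, s)) = J (y, s) + t • g (σ y) := by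
      simp only [φ, J, LinearMap.coprod_apply, LinearMap.add_apply, LinearMap.smul_apply, map_add,
        map_smul, LinearMap.toSpanSingleton_apply, hσ', hv, Submodule.subtype_apply, smul_zero,
        smul_add, smul_smul]
      rw [show t⁻¹ * s * t = s by field_simp]
      abel
    rw [h1, map_add, map_smul]
    have := LinearMap.congr_fun hπ (y, s)
    simp only [LinearMap.comp_apply, LinearMap.id_apply] at this
    rw [this]
    rfl
  have hinj : Function.Injective ((π ∘ₗ (LinearMap.range (f + t • g)).subtype) ∘ₗ
      ((f + t • g).rangeRestrict ∘ₗ φ)) := by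
    rw [injective_iff_map_eq_zero]
    intro q hq
    have hq' : q + t • N q = 0 := by rw [← hcomp]; exact hq
    by_contra hq0
    apply hμ1
    apply Module.End.hasEigenvalue_of_hasEigenvector (x := q)
    refine ⟨?_, hq0⟩
    rw [Module.End.mem_eigenspace_iff]
    have h2 : t • N q = -q := eq_neg_of_add_eq_zero_right hq'
    have h3 : N q = t⁻¹ • (-q) := by rw [← h2, smul_smul, inv_mul_cancel₀ ht0, one_smul]
    rw [h3, ht]; simp
  have hinj2 : Function.Injective ((f + t • g).rangeRestrict ∘ₗ φ) := by
    rw [LinearMap.coe_comp] at hinj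
    exact hinj.of_comp
  have := LinearMap.finrank_le_finrank_of_injective hinj2
  rw [Module.finrank_prod, Module.finrank_self] at this
  omega

section
set_option linter.unusedSectionVars false
variable {F E V : Type*} [Field F] [Field E] [Algebra F E] [FiniteDimensional F E]
  [AddCommGroup V] [Module F V] [Module E V] [IsScalarTower F E V] [FiniteDimensional E V]

theorem aux_functional (U : Submodule F V) (hU : U ≠ ⊤) :
    ∃ f : Module.Dual E V, f ≠ 0 ∧ U.map (f.restrictScalars F) ≠ ⊤ := by
  have : FiniteDimensional F V := FiniteDimensional.trans F E V
  obtain ⟨l, hl⟩ : ∃ l : Module.Dual F E, l ≠ 0 := exists_ne 0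
  obtain ⟨g, hg0, hg⟩ := Submodule.exists_le_ker_of_lt_top U (lt_top_iff_ne_top.2 hU)
  let T : Module.Dual E V →ₗ[F] Module.Dual F V :=
    { toFun := fun f => l ∘ₗ f.restrictScalars F
      map_add' := by intro a b; ext; simp
      map_smul' := by intro a b; ext; simp }
  have hT : Function.Injective T := by
    rw [injective_iff_map_eq_zero]
    intro f hf
    by_contra hf0
    apply hl
    have hs := LinearMap.surjective hf0
    ext e
    obtain ⟨x, rfl⟩ := hs e
    exact LinearMap.congr_fun hf x
  have hd : Module.finrank F (Module.Dual E V) = Module.finrank F (Module.Dual F V) := by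
    rw [Subspace.dual_finrank_eq, ← Module.finrank_mul_finrank F E V,
      ← Module.finrank_mul_finrank F E (Module.Dual E V), Subspace.dual_finrank_eq]
  have : FiniteDimensional F (Module.Dual E V) := FiniteDimensional.trans F E _
  obtain ⟨f, hf⟩ := (LinearMap.injective_iff_surjective_of_finrank_eq_finrank hd).1 hT g
  refine ⟨f, ?_, ?_⟩
  · rintro rfl
    apply hg0
    rw [← hf, map_zero]
  · intro htop
    apply hl
    ext e
    have : e ∈ U.map (f.restrictScalars F) := htop ▸ Submodule.mem_top
    obtain ⟨x, hx, rfl⟩ := this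
    have h1 := hg hx
    rw [LinearMap.mem_ker, ← hf] at h1
    exact h1

theorem aux_kill (hk : 2 ≤ Module.finrank E V) (v : V) : ∃ f : Module.Dual E V, f ≠ 0 ∧ f v = 0 := by
  have h : (E ∙ v) < ⊤ := by
    rw [lt_top_iff_ne_top]
    intro h
    have := finrank_span_le_card (R := E) ({v} : Set V)
    rw [h, finrank_top] at this
    simp at this
    omega
  obtain ⟨f, hf, hle⟩ := Submodule.exists_le_ker_of_lt_top _ h
  exact ⟨f, hf, hle (Submodule.mem_span_singleton_self v)⟩

theorem aux_count [Finite F] (U : Submodule F V) (c : ℕ)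
    (hc : ∀ f : Module.Dual E V, f ≠ 0 →
      Module.finrank F (LinearMap.ker ((f.restrictScalars F).domRestrict U)) = c) :
    Nat.card F ^ Module.finrank F U + (Nat.card E ^ Module.finrank E V - 1) * Nat.card F ^ c =
     Nat.card E ^ Module.finrank E V + (Nat.card F ^ Module.finrank F U - 1) *
      Nat.card E ^ (Module.finrank E V - 1) := by
  classical
  have : FiniteDimensional F V := FiniteDimensional.trans F E V
  have : Finite E := Module.finite_of_finite F
  have : Finite V := Module.finite_of_finite F
  have : Finite (Module.Dual E V) := Module.finite_of_finite E
  have := Fintype.ofFinite (Module.Dual E V)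
  have := Fintype.ofFinite U
  have cD : Nat.card (Module.Dual E V) = Nat.card E ^ Module.finrank E V := by
    rw [Module.natCard_eq_pow_finrank (K := E), Subspace.dual_finrank_eq]
  have cU : Nat.card U = Nat.card F ^ Module.finrank F U := Module.natCard_eq_pow_finrank
  have e1 : Nat.card (Σ f : Module.Dual E V, {u : U // f u = 0}) =
     Nat.card (Σ u : U, {f : Module.Dual E V // f u = 0}) := by
    refine Nat.card_congr ⟨fun p => ⟨p.2.1, p.1, p.2.2⟩, fun p => ⟨p.2.1, p.1, p.2.2⟩, ?_, ?_⟩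
    · intro p; rfl
    · intro p; rfl
  rw [Nat.card_sigma, Nat.card_sigma] at e1
  have a1 : ∀ f : Module.Dual E V, f ≠ 0 → Nat.card {u : U // f u = 0} = Nat.card F ^ c := by
    intro f hf
    rw [← hc f hf, ← Module.natCard_eq_pow_finrank]
    rfl
  have a2 : ∀ u : U, u ≠ 0 → Nat.card {f : Module.Dual E V // f u = 0} =
      Nat.card E ^ (Module.finrank E V - 1) := by
    intro u hu
    have h0 : Module.Dual.eval E V (u : V) ≠ 0 := by
      intro h
      exact hu (Subtype.ext ((Module.eval_apply_eq_zero_iff E (u : V)).1 h))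
    have h1 := Module.Dual.finrank_ker_add_one_of_ne_zero h0
    rw [Subspace.dual_finrank_eq] at h1
    rw [← h1, Nat.add_sub_cancel]
    exact Module.natCard_eq_pow_finrank (K := E)
      (V := LinearMap.ker (Module.Dual.eval E V (u : V)))
  have b1 : Nat.card {u : U // (0 : Module.Dual E V) u = 0} = Nat.card F ^ Module.finrank F U := by
    rw [← cU]
    exact Nat.card_congr (Equiv.subtypeUnivEquiv (by simp))
  have b2 : Nat.card {f : Module.Dual E V // f ((0 : U) : V) = 0} =
      Nat.card E ^ Module.finrank E V := by
    rw [← cD]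
    exact Nat.card_congr (Equiv.subtypeUnivEquiv (by simp))
  rw [← Finset.add_sum_erase _ _ (Finset.mem_univ (0 : Module.Dual E V)),
    ← Finset.add_sum_erase _ _ (Finset.mem_univ (0 : U)), b1, b2,
    Finset.sum_congr rfl (fun f hf => a1 f (Finset.ne_of_mem_erase hf)),
    Finset.sum_congr rfl (fun f hf => a2 f (Finset.ne_of_mem_erase hf))] at e1
  simp only [Finset.sum_const, Finset.card_erase_of_mem (Finset.mem_univ _), Finset.card_univ,
    ← Nat.card_eq_fintype_card, cD, cU, smul_eq_mul] at e1
  exact e1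

theorem aux_arith (A B Q q2 : ℕ) (hA : 1 ≤ A) (hB : q2 ≤ B) (hq : 2 ≤ q2) (hQ1 : 1 ≤ Q)
    (hQ : 2 * B ≤ Q * q2)
    (h : B + (Q * A - 1) * q2 = Q * A + (B - 1) * A) : False := by
  obtain ⟨x, hx⟩ : ∃ x, Q * A = x + 1 := ⟨Q * A - 1, by have := Nat.mul_pos hQ1 hA; omega⟩
  obtain ⟨y, rfl⟩ : ∃ y, B = y + 1 := ⟨B - 1, by omega⟩
  have h1 : 2 * ((y + 1) * A) ≤ (x + 1) * q2 := by
    rw [← hx]; nlinarith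
  have h2 : 2 * (x + 1) ≤ (x + 1) * q2 := by nlinarith
  rw [hx] at h
  simp only [Nat.add_sub_cancel] at h
  nlinarith

theorem aux_key (U : Submodule F V) (hk : 2 ≤ Module.finrank E V) (hU0 : U ≠ ⊥)
    (hc : ∀ f g : Module.Dual E V, f ≠ 0 → g ≠ 0 →
      Module.finrank F (U.map (f.restrictScalars F)) =
      Module.finrank F (U.map (g.restrictScalars F))) : U = ⊤ := by
  by_contra hU
  have : FiniteDimensional F V := FiniteDimensional.trans F E V
  obtain ⟨f0, hf0, hf0t⟩ := aux_functional (E := E) U hU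
  have hr : ∀ f : Module.Dual E V, LinearMap.range ((f.restrictScalars F).domRestrict U) =
     U.map (f.restrictScalars F) := by
    intro f
    rw [LinearMap.range_domRestrict]
  obtain ⟨u, hu, hu0⟩ := Submodule.exists_mem_ne_zero_of_ne_bot hU0
  obtain ⟨f1, hf1, hf1u⟩ := aux_kill (E := E) hk u
  have hlt0 := Submodule.finrank_lt hf0t
  rcases finite_or_infinite F with hF | hF
  · have : Finite E := Module.finite_of_finite F
    set c := Module.finrank F (LinearMap.ker ((f1.restrictScalars F).domRestrict U)) with hcdef
    have hrn : ∀ f : Module.Dual E V, Module.finrank F (U.map (f.restrictScalars F)) +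
       Module.finrank F (LinearMap.ker ((f.restrictScalars F).domRestrict U)) =
        Module.finrank F U := by
      intro f
      rw [← hr]
      exact LinearMap.finrank_range_add_finrank_ker _
    have hcc : ∀ f : Module.Dual E V, f ≠ 0 →
      Module.finrank F (LinearMap.ker ((f.restrictScalars F).domRestrict U)) = c := by
      intro f hf
      have h1 := hrn f
      have h2 := hrn f1
      have h3 := hc f f1 hf hf1
      omega
    have hcount := aux_count U c hcc
    have hc1 : 1 ≤ c := by
      rw [hcdef, Nat.one_le_iff_ne_zero]
      intro h
      rw [Submodule.finrank_eq_zero] at h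
      have : (⟨u, hu⟩ : U) ∈ LinearMap.ker ((f1.restrictScalars F).domRestrict U) := hf1u
      rw [h, Submodule.mem_bot] at this
      exact hu0 (congrArg Subtype.val this)
    have hcm : Module.finrank F U + 1 ≤ Module.finrank F E + c := by
      have h1 := hrn f0
      rw [hcc f0 hf0] at h1
      omega
    have hcu : c ≤ Module.finrank F U := by
      have h1 := hrn f0
      rw [hcc f0 hf0] at h1
      omega
    have hq : 2 ≤ Nat.card F := Finite.one_lt_card
    have hEq : Nat.card E = Nat.card F ^ Module.finrank F E := Module.natCard_eq_pow_finrank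
    have hkk : Nat.card E ^ Module.finrank E V =
        Nat.card E * Nat.card E ^ (Module.finrank E V - 1) := by
      rw [← pow_succ']
      congr 1
      omega
    rw [hkk] at hcount
    refine aux_arith _ _ _ _ ?_ ?_ ?_ ?_ ?_ hcount
    · exact Nat.pos_of_ne_zero (pow_ne_zero _ Nat.card_pos.ne')
    · exact Nat.pow_le_pow_right (by omega) hcu
    · exact hq.trans (Nat.le_self_pow (by omega) _)
    · exact Nat.card_pos
    · rw [hEq, ← pow_add]
      calc 2 * Nat.card F ^ Module.finrank F U
          ≤ Nat.card F * Nat.card F ^ Module.finrank F U := Nat.mul_le_mul_right _ hq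
        _ = Nat.card F ^ (Module.finrank F U + 1) := (pow_succ' _ _).symm
        _ ≤ _ := Nat.pow_le_pow_right (by omega) hcm
  · have hlt : Module.finrank F (U.map (f1.restrictScalars F)) < Module.finrank F E := by
      rw [hc f1 f0 hf1 hf0]; exact hlt0
    obtain ⟨e, he⟩ : ∃ e, e ∉ U.map (f1.restrictScalars F) := by
      by_contra! h
      rw [Submodule.eq_top_iff'.2 h, finrank_top] at hlt
      exact lt_irrefl _ hlt
    have he0 : e ≠ 0 := by rintro rfl; exact he (Submodule.zero_mem _)
    obtain ⟨g, hg⟩ : ∃ g : Module.Dual E V, g u = 1 := by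
      obtain ⟨g, hg⟩ := Module.Projective.exists_dual_ne_zero E hu0
      exact ⟨(g u)⁻¹ • g, by simp [hg]⟩
    obtain ⟨t, ht, hlt'⟩ := aux_pencil ((f1.restrictScalars F).domRestrict U)
      (((e • g).restrictScalars F).domRestrict U) ⟨u, hu⟩ hf1u (by
        rw [hr]; simpa [hg] using he)
    have h2 := hr (f1 + t • (e • g))
    have h3 : ((f1 + t • (e • g)).restrictScalars F).domRestrict U =
      (f1.restrictScalars F).domRestrict U +
        t • (((e • g).restrictScalars F).domRestrict U) := rfl
    rw [← h3, hr, hr, hc f1 (f1 + t • (e • g)) hf1] at hlt'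
    · exact lt_irrefl _ hlt'
    · intro h
      have := LinearMap.congr_fun h u
      simp [hf1u, hg, he0, ht] at this

theorem aux_hyper (U : Submodule F V) (W : Submodule E V) (f : Module.Dual E W) :
    Module.finrank F ((U.comap (W.subtype.restrictScalars F)).map (f.restrictScalars F)) +
      Module.finrank F (U ⊓ ((LinearMap.ker f).map W.subtype).restrictScalars F :
        Submodule F V) =
    Module.finrank F (U.comap (W.subtype.restrictScalars F)) := by
  have : FiniteDimensional F V := FiniteDimensional.trans F E V
  have : FiniteDimensional F W := FiniteDimensional.trans F E W
  set U' := U.comap (W.subtype.restrictScalars F) with hU'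
  have h := LinearMap.finrank_range_add_finrank_ker ((f.restrictScalars F).domRestrict U')
  rw [LinearMap.range_domRestrict] at h
  rw [← h]
  congr 1
  have e : (U ⊓ ((LinearMap.ker f).map W.subtype).restrictScalars F : Submodule F V) =
      (LinearMap.ker ((f.restrictScalars F).domRestrict U')).map
        ((W.subtype.restrictScalars F) ∘ₗ U'.subtype) := by
    ext x
    constructor
    · rintro ⟨hx, y, hy, rfl⟩
      exact ⟨⟨y, hx⟩, hy, rfl⟩
    · rintro ⟨⟨y, hyU⟩, hy, rfl⟩
      exact ⟨hyU, y, hy, rfl⟩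
  rw [e]
  apply aux_finrank_map
  exact W.subtype_injective.comp U'.subtype_injective

theorem aux_reduce (U : Submodule F V) (hspan : Submodule.span E (U : Set V) = ⊤)
    (s : ℕ) (hs1 : 1 ≤ s) (hs : s + 1 ≤ Module.finrank E V)
    (hc : ∀ W W' : Submodule E V, Module.finrank E W = s → Module.finrank E W' = s →
      Module.finrank F (U ⊓ W.restrictScalars F : Submodule F V) =
      Module.finrank F (U ⊓ W'.restrictScalars F : Submodule F V)) : U = ⊤ := by
  have key : ∀ v ∈ U, ∀ e : E, e • v ∈ U := by
    intro v hv e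
    by_cases hv0 : v = 0
    · subst hv0; simp
    obtain ⟨b, hbU, hvb, hUb, hli⟩ := exists_linearIndepOn_id_extension
      (K := E) (s := {v}) (t := (U : Set V)) (LinearIndepOn.singleton hv0) (by simpa using hv)
    have hbspan : Submodule.span E b = ⊤ := by
      rw [eq_top_iff, ← hspan]
      exact Submodule.span_le.2 hUb
    have hbf : b.Finite := hli.setFinite
    have hbc : b.ncard = Module.finrank E V := by
      rw [← finrank_top E V, ← hbspan]
      exact (aux_ncard hli).symm
    obtain ⟨S, hvS, hSb, hSc⟩ := Set.exists_subsuperset_card_eq hvb (n := s + 1)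
      (by simp) (by omega)
    have hSli : LinearIndepOn E id S := hli.mono hSb
    set W := Submodule.span E S with hW
    have hWf : Module.finrank E W = s + 1 := by
      rw [hW, aux_ncard hSli, hSc]
    have hvW : v ∈ W := Submodule.subset_span (hvS rfl)
    have hk := aux_key (E := E) (V := W) (U.comap (W.subtype.restrictScalars F)) (by omega) (by
        intro h
        have : (⟨v, hvW⟩ : W) ∈ U.comap (W.subtype.restrictScalars F) := hv
        rw [h, Submodule.mem_bot] at this
        exact hv0 (congrArg Subtype.val this)) (by
        intro f g hf hg
        have hd : ∀ f : Module.Dual E W, f ≠ 0 →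
            Module.finrank E ((LinearMap.ker f).map W.subtype) = s := by
          intro f hf
          have := Module.Dual.finrank_ker_add_one_of_ne_zero hf
          rw [aux_finrank_map _ W.subtype_injective]
          omega
        have h1 := aux_hyper U W f
        have h2 := aux_hyper U W g
        have h3 := hc _ _ (hd f hf) (hd g hg)
        omega)
    have : (⟨e • v, W.smul_mem e hvW⟩ : W) ∈ U.comap (W.subtype.restrictScalars F) :=
      hk ▸ Submodule.mem_top
    exact this
  rw [Submodule.eq_top_iff']
  intro x
  have hx : x ∈ Submodule.span E (U : Set V) := hspan ▸ Submodule.mem_top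
  induction hx using Submodule.span_induction with
  | mem x h => exact h
  | zero => exact U.zero_mem
  | add x y _ _ hx hy => exact U.add_mem hx hy
  | smul a x _ hx => exact key x hx a

theorem aux_supp (n : ℕ) (D : Submodule E (Fin n → E)) (U : Submodule F (Fin n → F)) :
    (D : Set (Fin n → E)) ⊆
      (Submodule.span E (fIncl F E n '' (U : Set (Fin n → F))) : Set (Fin n → E)) ↔
    ∀ d ∈ D, ∀ l : Module.Dual F E, (fun j => l (d j)) ∈ U := by
  constructor
  · intro h d hd
    have hx := h hd
    rw [SetLike.mem_coe] at hx
    clear hd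
    induction hx using Submodule.span_induction with
    | mem x h =>
      obtain ⟨u, hu, rfl⟩ := h
      intro l
      have : (fun j => l (fIncl F E n u j)) = l 1 • u := by
        ext j
        simp [fIncl, Algebra.algebraMap_eq_smul_one, mul_comm]
      rw [this]
      exact U.smul_mem _ hu
    | zero => intro l; convert U.zero_mem using 1; ext j; simp
    | add x y _ _ hx hy =>
      intro l
      convert U.add_mem (hx l) (hy l) using 1
      ext j
      simp
    | smul a x _ hx =>
      intro l
      exact hx (l ∘ₗ LinearMap.mulLeft F a)
  · intro h d hd
    let b := Module.finBasis F E
    have : d = ∑ i, b i • fIncl F E n (fun j => b.coord i (d j)) := by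
      ext j
      rw [Finset.sum_apply]
      conv_lhs => rw [← b.sum_repr (d j)]
      refine Finset.sum_congr rfl fun i _ => ?_
      simp [fIncl, Algebra.smul_def, mul_comm]
    rw [this]
    exact Submodule.sum_mem _ fun i _ => Submodule.smul_mem _ _
      (Submodule.subset_span ⟨_, h d hd _, rfl⟩)

theorem aux_wt (n : ℕ) (D : Submodule E (Fin n → E)) (K : Submodule F (Fin n → F))
    (hK : ∀ y, y ∈ K ↔ ∀ d ∈ D, ∑ j, y j • d j = 0) :
    wt F E n (D : Set (Fin n → E)) + Module.finrank F K = n := by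
  let S : Set (Fin n → F) := {x | ∃ d ∈ D, ∃ l : Module.Dual F E, x = fun j => l (d j)}
  have h1 : rankSupport F E n (D : Set (Fin n → E)) = Submodule.span F S := by
    rw [rankSupport, Submodule.span]
    congr 1
    ext U
    simp only [Set.mem_ofPred_eq, aux_supp]
    constructor
    · rintro h _ ⟨d, hd, l, rfl⟩
      exact h d hd l
    · intro h d hd l
      exact h ⟨d, hd, l, rfl⟩
  have h2 : K = (Submodule.span F S).dualAnnihilator.comap
      (dotProductEquiv F (Fin n)).toLinearMap := by
    ext y
    rw [hK, Submodule.mem_comap, Submodule.mem_dualAnnihilator]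
    constructor
    · intro h x hx
      induction hx using Submodule.span_induction with
      | mem x hx =>
        obtain ⟨d, hd, l, rfl⟩ := hx
        have := congrArg l (h d hd)
        simpa [dotProduct] using this
      | zero => simp
      | add x z _ _ hx hz => rw [map_add, hx, hz, add_zero]
      | smul a x _ hx => rw [map_smul, hx, smul_zero]
    · intro h d hd
      rw [← Module.forall_dual_apply_eq_zero_iff F]
      intro l
      have := h _ (Submodule.subset_span ⟨d, hd, l, rfl⟩)
      simpa [dotProduct] using this
  have h3 : Module.finrank F K = Module.finrank F (Submodule.span F S).dualAnnihilator := by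
    rw [h2]
    exact LinearEquiv.finrank_eq (Submodule.comap_equiv_self_of_inj_of_le
      (dotProductEquiv F (Fin n)).injective (by
        rw [LinearMap.range_eq_top.2 (dotProductEquiv F (Fin n)).surjective]; exact le_top))
  rw [wt, h1, h3, Subspace.finrank_add_finrank_dualAnnihilator_eq, Module.finrank_fin_fun]

theorem aux_comap {A B : Type*} [AddCommGroup A] [Module F A] [FiniteDimensional F A]
    [AddCommGroup B] [Module F B] (g : A →ₗ[F] B) (W : Submodule F B) :
    Module.finrank F (W.comap g) + Module.finrank F (LinearMap.range g) =
    Module.finrank F (LinearMap.range g ⊓ W : Submodule F B) + Module.finrank F A := by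
  have h1 := LinearMap.finrank_range_add_finrank_ker g
  have h2 := LinearMap.finrank_range_add_finrank_ker (g.domRestrict (W.comap g))
  rw [LinearMap.range_domRestrict, Submodule.map_comap_eq] at h2
  have h3 : Module.finrank F (LinearMap.ker (g.domRestrict (W.comap g))) =
      Module.finrank F (LinearMap.ker g) := by
    rw [LinearMap.ker_domRestrict]
    apply LinearEquiv.finrank_eq
    apply Submodule.comap_equiv_self_of_inj_of_le (Submodule.subtype_injective _)
    rw [Submodule.range_subtype]
    intro x hx
    rw [Submodule.mem_comap, LinearMap.mem_ker.1 hx]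
    exact W.zero_mem
  omega

/-- Evaluation of functionals on the columns. -/
def auxGam {n : ℕ} (E : Type*) {V : Type*} [Field E] [AddCommGroup V] [Module E V]
    (col : Fin n → V) : Module.Dual E V →ₗ[E] (Fin n → E) where
  toFun f j := f (col j)
  map_add' _ _ := rfl
  map_smul' _ _ := rfl

theorem aux_wt2 {n : ℕ} (col : Fin n → V) (X : Submodule E (Module.Dual E V)) :
    wt F E n ((X.map (auxGam E col) : Submodule E (Fin n → E)) : Set (Fin n → E)) +
      Module.finrank F (Submodule.span F (Set.range col) ⊓
        (X.dualCoannihilator).restrictScalars F : Submodule F V) =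
    Module.finrank F (Submodule.span F (Set.range col)) := by
  have h1 := aux_wt (F := F) n (X.map (auxGam E col))
    ((X.dualCoannihilator.restrictScalars F).comap (Fintype.linearCombination F col)) (by
      intro y
      rw [Submodule.mem_comap, Submodule.restrictScalars_mem, Submodule.mem_dualCoannihilator]
      simp only [Submodule.mem_map, forall_exists_index, and_imp, forall_apply_eq_imp_iff₂]
      refine forall₂_congr fun f hf => ?_
      rw [Fintype.linearCombination_apply, map_sum]
      have : ∀ j, f (y j • col j) = y j • auxGam E col f j := fun j =>
        (f.restrictScalars F).map_smul _ _
      simp only [this])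
  have h2 := aux_comap (Fintype.linearCombination F col) (X.dualCoannihilator.restrictScalars F)
  rw [Fintype.range_linearCombination, Module.finrank_fin_fun] at h2
  omega
end

/-- Theorem 4.6: for an `[n,k]` code `C` with generator matrix `G`, `U` the `F`-span of the
columns of `G`, and `r ∈ {1, …, k-1}`, the following are equivalent:
(1) all `r`-dimensional subcodes of `C` have the same rank support weight;
(2) `U = E^k`; (3) `wt(C) = dim_F C = mk`. -/
theorem statement15 (F E : Type*) [Field F] [Field E] [Algebra F E]
    [FiniteDimensional F E] (m : ℕ) (hm : Module.finrank F E = m)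
    (n k : ℕ) (hk : 1 ≤ k) (hkn : k ≤ n)
    (C : Submodule E (Fin n → E)) (hC : Module.finrank E C = k)
    (G : Fin k → Fin n → E) (hG : Submodule.span E (Set.range G) = C)
    (U : Submodule F (Fin k → E))
    (hU : U = Submodule.span F (Set.range fun j => fun i => G i j))
    (r : ℕ) (hr1 : 1 ≤ r) (hrk : r + 1 ≤ k) :
    ((∀ D L : Submodule E (Fin n → E), D ≤ C → L ≤ C →
        Module.finrank E D = r → Module.finrank E L = r →
          wt F E n (D : Set (Fin n → E)) = wt F E n (L : Set (Fin n → E))) ↔ U = ⊤) ∧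
      ((∀ D L : Submodule E (Fin n → E), D ≤ C → L ≤ C →
        Module.finrank E D = r → Module.finrank E L = r →
          wt F E n (D : Set (Fin n → E)) = wt F E n (L : Set (Fin n → E))) ↔
        (wt F E n (C : Set (Fin n → E)) = Module.finrank F (C.restrictScalars F) ∧
          Module.finrank F (C.restrictScalars F) = m * k)) := by
  classical
  subst hU
  have hmk : Module.finrank F (C.restrictScalars F) = m * k := by
    rw [← hm, ← hC]
    exact (Module.finrank_mul_finrank F E C).symm
  set col : Fin n → (Fin k → E) := fun j => fun i => G i j with hcol
  set U := Submodule.span F (Set.range col) with hUdef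
  have hrange : LinearMap.range (auxGam E col) = C := by
    rw [← hG]
    apply le_antisymm
    · rintro _ ⟨f, rfl⟩
      have : auxGam E col f = ∑ i, f (Pi.single i 1) • G i := by
        ext j
        rw [Finset.sum_apply]
        change f (col j) = _
        conv_lhs => rw [pi_eq_sum_univ' (col j), map_sum]
        refine Finset.sum_congr rfl fun i _ => ?_
        rw [map_smul, smul_eq_mul, mul_comm]
        rfl
      rw [this]
      exact Submodule.sum_mem _ fun i _ => Submodule.smul_mem _ _ (Submodule.subset_span ⟨i, rfl⟩)
    · rw [Submodule.span_le]
      rintro _ ⟨i, rfl⟩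
      exact ⟨LinearMap.proj i, rfl⟩
  have hinj : Function.Injective (auxGam E col) := by
    have h := LinearMap.finrank_range_add_finrank_ker (auxGam E col)
    rw [hrange, hC, Subspace.dual_finrank_eq, Module.finrank_fin_fun] at h
    rw [← LinearMap.ker_eq_bot, ← Submodule.finrank_eq_zero]
    omega
  have hspan : Submodule.span E (U : Set (Fin k → E)) = ⊤ := by
    by_contra hne
    obtain ⟨f, hf0, hf⟩ := Submodule.exists_le_ker_of_lt_top _ (lt_top_iff_ne_top.2 hne)
    apply hf0
    apply hinj
    rw [map_zero]
    ext j
    exact hf (Submodule.subset_span (Submodule.subset_span ⟨j, rfl⟩))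
  have hVF : Module.finrank F (Fin k → E) = m * k := by
    rw [← Module.finrank_mul_finrank F E (Fin k → E), hm, Module.finrank_fin_fun]
  have hFV : FiniteDimensional F (Fin k → E) := FiniteDimensional.trans F E _
  have hwC : wt F E n (C : Set (Fin n → E)) = Module.finrank F U := by
    have h := aux_wt2 (F := F) col (⊤ : Submodule E (Module.Dual E (Fin k → E)))
    rw [Submodule.map_top, hrange, Submodule.dualCoannihilator_top, Submodule.restrictScalars_bot,
      inf_bot_eq, finrank_bot, add_zero] at h
    exact h
  have h12 : (∀ D L : Submodule E (Fin n → E), D ≤ C → L ≤ C →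
        Module.finrank E D = r → Module.finrank E L = r →
          wt F E n (D : Set (Fin n → E)) = wt F E n (L : Set (Fin n → E))) ↔ U = ⊤ := by
    constructor
    · intro h
      have hX : ∀ W : Submodule E (Fin k → E), Module.finrank E W = k - r →
          (W.dualAnnihilator.map (auxGam E col) ≤ C) ∧
          Module.finrank E (W.dualAnnihilator.map (auxGam E col)) = r := by
        intro W hW
        refine ⟨hrange ▸ LinearMap.map_le_range, ?_⟩
        rw [aux_finrank_map _ hinj]
        have := Subspace.finrank_add_finrank_dualAnnihilator_eq W
        rw [Module.finrank_fin_fun] at this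
        omega
      apply aux_reduce U hspan (k - r) (by omega) (by rw [Module.finrank_fin_fun]; omega)
      intro W W' hW hW'
      have h1 := aux_wt2 (F := F) col W.dualAnnihilator
      have h2 := aux_wt2 (F := F) col W'.dualAnnihilator
      have h3 := h _ _ (hX W hW).1 (hX W' hW').1 (hX W hW).2 (hX W' hW').2
      rw [Subspace.dualAnnihilator_dualCoannihilator_eq, ← hUdef] at h1 h2
      omega
    · intro hU
      have hD : ∀ D : Submodule E (Fin n → E), D ≤ C → Module.finrank E D = r →
          wt F E n (D : Set (Fin n → E)) + m * (k - r) = m * k := by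
        intro D hDC hDr
        set X := D.comap (auxGam E col) with hX
        have hm1 : X.map (auxGam E col) = D := by
          rw [hX, Submodule.map_comap_eq, hrange]
          exact inf_eq_right.2 hDC
        have hXr : Module.finrank E X = r := by
          rw [← hDr, ← hm1, aux_finrank_map _ hinj]
        have h1 := aux_wt2 (F := F) col X
        rw [hm1, ← hUdef, hU, top_inf_eq, finrank_top, hVF] at h1
        have h2 : Module.finrank F (X.dualCoannihilator.restrictScalars F) =
            m * Module.finrank E X.dualCoannihilator := by
          rw [← hm]
          exact (Module.finrank_mul_finrank F E X.dualCoannihilator).symm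
        have h3 := Subspace.finrank_add_finrank_dualCoannihilator_eq X
        rw [Module.finrank_fin_fun] at h3
        have h4 : Module.finrank E X.dualCoannihilator = k - r := by omega
        rw [h2, h4] at h1
        exact h1
      intro D L hDC hLC hDr hLr
      have h1 := hD D hDC hDr
      have h2 := hD L hLC hLr
      omega
  refine ⟨h12, h12.trans ?_⟩
  rw [hwC, hmk]
  constructor
  · intro h
    rw [h, finrank_top, hVF]
    exact ⟨rfl, rfl⟩
  · rintro ⟨h, -⟩
    apply Submodule.eq_top_of_finrank_eq
    rw [h, hVF]
end

section
/- Fix (λ,s,k) ∈ ℕ³ with k ≥ s ≥ λ+1. Let X be a k-dimensional E-vector space and let J be an F-subspace of X that is (k−λ, 2k−λ−s)-evasive in X. Then: (1) if m = 2, then dim_F(J) ≤ 2k−s; (2) if m = 3, then dim_F(J) ≤ 2k−s+⌈λ/2⌉; (3) if m = 4, then dim_F(J) ≤ 2k−s+λ+1. -/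
open Submodule Pointwise

/-- `J` is `(h, r)`-evasive in the `E`-vector space `X`. -/
def IsEvasive (F E : Type*) {X : Type*} [Field F] [Field E] [Algebra F E]
    [AddCommGroup X] [Module E X] [Module F X] [IsScalarTower F E X]
    (J : Submodule F X) (h : ℕ) (r : ℤ) : Prop :=
  Submodule.span E (J : Set X) = ⊤ ∧
    ∀ M : Submodule E X, Module.finrank E M = h →
      (Module.finrank F ↥(J ⊓ M.restrictScalars F) : ℤ) ≤ r

/-- Enlarging a subspace to one of prescribed dimension. -/
theorem exists_enlarge {F X : Type*} [Field F] [AddCommGroup X] [Module F X]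
    [FiniteDimensional F X] (J : Submodule F X) (d : ℕ)
    (hd : Module.finrank F J + d ≤ Module.finrank F X) :
    ∃ J' : Submodule F X, J ≤ J' ∧ Module.finrank F J' = Module.finrank F J + d := by
  induction d with
  | zero => exact ⟨J, le_rfl, rfl⟩
  | succ d ih =>
    obtain ⟨J', hle, hJ'⟩ := ih (by omega)
    have hne : ∃ x, x ∉ J' := by
      by_contra! h
      have : J' = ⊤ := by ext x; simp [h x]
      rw [this, finrank_top] at hJ'
      omega
    obtain ⟨x, hx⟩ := hne
    exact ⟨J' ⊔ span F {x}, hle.trans le_sup_left, by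
      rw [Submodule.finrank_sup_span_singleton hx]; omega⟩

theorem step_lemma {F E X : Type*} [Field F] [Field E] [Algebra F E]
    [FiniteDimensional F E]
    [AddCommGroup X] [Module E X] [Module F X] [IsScalarTower F E X]
    [FiniteDimensional E X] [FiniteDimensional F X] (hm : 2 ≤ Module.finrank F E)
    (J : Submodule F X) (j : ℕ) (hj : j < Module.finrank E X)
    (h1 : Module.finrank F E * Module.finrank E X + 4 * j
      < 2 * Module.finrank F J + Module.finrank F E * j)
    (h2 : 2 * j + 2 ≤ Module.finrank F J)
    (M : Submodule E X) (hM : Module.finrank E M = j)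
    (hJM : 2 * j ≤ Module.finrank F ↥(J ⊓ M.restrictScalars F)) :
    ∃ M' : Submodule E X, Module.finrank E M' = j + 1 ∧
      2 * (j + 1) ≤ Module.finrank F ↥(J ⊓ M'.restrictScalars F) := by
  have key : ∀ x, x ∉ M → Module.finrank E ↥(M ⊔ span E {x}) = j + 1 := fun x hx => by
    rw [Submodule.finrank_sup_span_singleton hx, hM]
  have hxin : ∀ x : X, x ∈ M ⊔ span E {x} := fun x =>
    le_sup_right (a := M) (Submodule.mem_span_singleton_self x)
  have hle : ∀ x : X, J ⊓ M.restrictScalars F ≤ J ⊓ (M ⊔ span E {x}).restrictScalars F :=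
    fun x y hy => ⟨hy.1, le_sup_left (a := M) hy.2⟩
  by_cases c1 : 2 * j + 2 ≤ Module.finrank F ↥(J ⊓ M.restrictScalars F)
  · have hne : ∃ x, x ∉ M := by
      by_contra! h
      have : M = ⊤ := by ext x; simp [h x]
      rw [this, finrank_top] at hM
      omega
    obtain ⟨x, hx⟩ := hne
    exact ⟨_, key x hx, le_trans (by omega) (Submodule.finrank_mono (hle x))⟩
  by_cases c2 : 2 * j + 1 ≤ Module.finrank F ↥(J ⊓ M.restrictScalars F)
  · have hne : ∃ x ∈ J, x ∉ M := by
      by_contra! h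
      have : J ⊓ M.restrictScalars F = J := inf_eq_left.2 h
      rw [this] at c1
      omega
    obtain ⟨x, hxJ, hx⟩ := hne
    refine ⟨_, key x hx, ?_⟩
    have hx' : x ∉ J ⊓ M.restrictScalars F := fun h => hx h.2
    have := Submodule.finrank_sup_span_singleton hx'
    have h3 : (J ⊓ M.restrictScalars F) ⊔ span F {x} ≤
        J ⊓ (M ⊔ span E {x}).restrictScalars F := by
      refine sup_le (hle x) ?_
      rw [Submodule.span_singleton_le_iff_mem]
      exact ⟨hxJ, hxin x⟩
    have := Submodule.finrank_mono h3
    omega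
  -- main case
  have hα : ∃ α : E, ∀ a : F, algebraMap F E a ≠ α := by
    by_contra! h
    have : (⊥ : Subalgebra F E) = ⊤ := by
      refine Algebra.eq_top_iff.2 ?_
      intro x
      obtain ⟨a, ha⟩ := h x
      exact Algebra.mem_bot.2 ⟨a, ha⟩
    rw [Subalgebra.bot_eq_top_iff_finrank_eq_one] at this
    omega
  obtain ⟨α, hα⟩ := hα
  have hα0 : α ≠ 0 := fun h => hα 0 (by simp [h])
  set N := M.restrictScalars F with hN
  have hNd : Module.finrank F N = Module.finrank F E * j := by
    rw [← hM, Module.finrank_mul_finrank F E M]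
    rfl
  have hXd : Module.finrank F X = Module.finrank F E * Module.finrank E X :=
    (Module.finrank_mul_finrank F E X).symm
  set f : X →ₗ[F] X := Algebra.lsmul F F X α with hf
  have hfa : ∀ x, f x = α • x := fun x => rfl
  have hfi : Function.Injective f := fun x y h => by
    rw [hfa, hfa] at h
    exact smul_right_injective X hα0 h
  set P := J ⊔ N with hP
  have hQd : Module.finrank F ↥(P.map f) = Module.finrank F P :=
    (LinearEquiv.finrank_eq (Submodule.equivMapOfInjective f hfi P)).symm
  have e1 := Submodule.finrank_sup_add_finrank_inf_eq J N
  have e2 := Submodule.finrank_sup_add_finrank_inf_eq P (P.map f)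
  have e3 := Submodule.finrank_le (P ⊔ P.map f)
  have hlt : Module.finrank F N < Module.finrank F ↥(P ⊓ P.map f) := by
    rw [← hP] at e1
    rw [hXd] at e3
    omega
  have hne : ∃ v ∈ P ⊓ P.map f, v ∉ N := by
    by_contra! h
    have := Submodule.finrank_mono (show P ⊓ P.map f ≤ N from h)
    omega
  obtain ⟨v, ⟨hv1, w, hw, rfl⟩, hvN⟩ := hne
  rw [hfa] at hv1 hvN
  obtain ⟨x, hx, n, hn, rfl⟩ := Submodule.mem_sup.1 hw
  obtain ⟨y, hy, n', hn', hyn⟩ := Submodule.mem_sup.1 hv1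
  have hn : n ∈ M := hn
  have hn' : n' ∈ M := hn'
  have hxM : x ∉ M := fun h => hvN (M.smul_mem α (M.add_mem h hn))
  have hyx : y = α • x + (α • n - n') := by
    rw [eq_sub_of_add_eq hyn, smul_add]; abel
  have hdM : α • n - n' ∈ M := M.sub_mem (M.smul_mem α hn) hn'
  refine ⟨_, key x hxM, ?_⟩
  have hx' : x ∉ J ⊓ N := fun h => hxM h.2
  have d1 := Submodule.finrank_sup_span_singleton hx'
  have hy' : y ∉ (J ⊓ N) ⊔ span F {x} := by
    intro h
    obtain ⟨z, hz, t, ht, hzt⟩ := Submodule.mem_sup.1 h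
    obtain ⟨a, rfl⟩ := Submodule.mem_span_singleton.1 ht
    have hz : z ∈ M := hz.2
    have h5 : (α - algebraMap F E a) • x ∈ M := by
      have : (α - algebraMap F E a) • x = z - (α • n - n') := by
        rw [sub_smul, algebraMap_smul, eq_sub_of_add_eq hzt, hyx]; abel
      rw [this]
      exact M.sub_mem hz hdM
    have h6 : α - algebraMap F E a ≠ 0 := fun h => hα a (sub_eq_zero.1 h).symm
    exact hxM ((M.smul_mem_iff h6).1 h5)
  have d2 := Submodule.finrank_sup_span_singleton hy'
  have h3 : ((J ⊓ N) ⊔ span F {x}) ⊔ span F {y} ≤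
      J ⊓ (M ⊔ span E {x}).restrictScalars F := by
    refine sup_le (sup_le (hle x) ?_) ?_
    · rw [Submodule.span_singleton_le_iff_mem]
      exact ⟨hx, hxin x⟩
    · rw [Submodule.span_singleton_le_iff_mem]
      refine ⟨hy, ?_⟩
      rw [hyx]
      exact (M ⊔ span E {x}).add_mem (Submodule.smul_mem _ α (hxin x))
        (le_sup_left (a := M) hdM)
  have := Submodule.finrank_mono h3
  omega

theorem chain_lemma {F E X : Type*} [Field F] [Field E] [Algebra F E]
    [FiniteDimensional F E]
    [AddCommGroup X] [Module E X] [Module F X] [IsScalarTower F E X]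
    [FiniteDimensional E X] [FiniteDimensional F X] (hm : 2 ≤ Module.finrank F E)
    (J : Submodule F X) (h : ℕ) (hh : h ≤ Module.finrank E X)
    (h1 : ∀ j < h, Module.finrank F E * Module.finrank E X + 4 * j
      < 2 * Module.finrank F J + Module.finrank F E * j)
    (h2 : 2 * h ≤ Module.finrank F J) :
    ∃ M : Submodule E X, Module.finrank E M = h ∧
      2 * h ≤ Module.finrank F ↥(J ⊓ M.restrictScalars F) := by
  induction h with
  | zero => exact ⟨⊥, by simp, by simp⟩
  | succ j ih =>
    obtain ⟨M, hM, hJM⟩ := ih (by omega) (fun i hi => h1 i (by omega)) (by omega)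
    exact step_lemma hm J j (by omega) (h1 j (by omega)) (by omega) M hM hJM

theorem bound_lemma {F E X : Type*} [Field F] [Field E] [Algebra F E]
    [FiniteDimensional F E]
    [AddCommGroup X] [Module E X] [Module F X] [IsScalarTower F E X]
    [FiniteDimensional E X] [FiniteDimensional F X] (hm : 2 ≤ Module.finrank F E)
    (J : Submodule F X) (h n : ℕ) (hh : h ≤ Module.finrank E X)
    (hn : n ≤ Module.finrank F E * Module.finrank E X)
    (h1 : ∀ j < h, Module.finrank F E * Module.finrank E X + 4 * j
      < 2 * n + Module.finrank F E * j)
    (h2 : 2 * h ≤ n) :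
    ∃ M : Submodule E X, Module.finrank E M = h ∧
      (2 * h ≤ Module.finrank F ↥(J ⊓ M.restrictScalars F) ∨
      2 * h + Module.finrank F J ≤ Module.finrank F ↥(J ⊓ M.restrictScalars F) + n) := by
  by_cases c : n ≤ Module.finrank F J
  · obtain ⟨M, hM, hJ⟩ := chain_lemma hm J h hh
      (fun j hj => lt_of_lt_of_le (h1 j hj) (by omega)) (by omega)
    exact ⟨M, hM, Or.inl hJ⟩
  · obtain ⟨J', hle, hJ'⟩ := exists_enlarge J (n - Module.finrank F J) (by
      rw [← Module.finrank_mul_finrank F E X]; omega)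
    have hJ'n : Module.finrank F J' = n := by omega
    obtain ⟨M, hM, hJM⟩ := chain_lemma hm J' h hh (by rwa [hJ'n]) (by omega)
    refine ⟨M, hM, Or.inr ?_⟩
    have e := Submodule.finrank_sup_add_finrank_inf_eq J (J' ⊓ M.restrictScalars F)
    have e' := Submodule.finrank_mono (sup_le hle (inf_le_left : J' ⊓ M.restrictScalars F ≤ J'))
    rw [← inf_assoc, inf_eq_left.2 hle] at e
    omega

/-- Corollary 5.2: fix `(λ, s, k) ∈ ℕ³` with `k ≥ s ≥ λ + 1`, and let `J` be an
`(k-λ, 2k-λ-s)`-evasive `F`-subspace of a `k`-dimensional `E`-vector space `X`. Then: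
(1) if `m = 2`, `dim_F J ≤ 2k - s`; (2) if `m = 3`, `dim_F J ≤ 2k - s + ⌈λ/2⌉`;
(3) if `m = 4`, `dim_F J ≤ 2k - s + λ + 1`. -/
theorem statement16 (F E : Type*) [Field F] [Field E] [Algebra F E]
    [FiniteDimensional F E] (m : ℕ) (hm : Module.finrank F E = m)
    (l s k : ℕ) (hsk : s ≤ k) (hls : l + 1 ≤ s)
    (X : Type*) [AddCommGroup X] [Module E X] [Module F X] [IsScalarTower F E X]
    [FiniteDimensional E X] (hX : Module.finrank E X = k)
    (J : Submodule F X) (hJ : IsEvasive F E J (k - l) ((2 * k - l - s : ℕ) : ℤ)) :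
    (m = 2 → Module.finrank F J ≤ 2 * k - s) ∧
      (m = 3 → Module.finrank F J ≤ 2 * k - s + (l + 1) / 2) ∧
      (m = 4 → Module.finrank F J ≤ 2 * k - s + l + 1) := by
  haveI : FiniteDimensional F X := FiniteDimensional.trans F E X
  obtain ⟨-, hev⟩ := hJ
  have hev' : ∀ M : Submodule E X, Module.finrank E M = k - l →
      Module.finrank F ↥(J ⊓ M.restrictScalars F) ≤ 2 * k - l - s := fun M hM => by
    exact_mod_cast hev M hM
  refine ⟨?_, ?_, ?_⟩ <;> rintro rfl
  · obtain ⟨M, hM, h⟩ := bound_lemma (E := E) (by omega) J (k - l) (2 * k - l) (by omega)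
      (by rw [hm, hX]; omega) (fun j hj => by rw [hm, hX]; omega) (by omega)
    have := hev' M hM
    omega
  · obtain ⟨M, hM, h⟩ := bound_lemma (E := E) (by omega) J (k - l) (2 * k - l / 2) (by omega)
      (by rw [hm, hX]; omega) (fun j hj => by rw [hm, hX]; omega) (by omega)
    have := hev' M hM
    omega
  · obtain ⟨M, hM, h⟩ := bound_lemma (E := E) (by omega) J (k - l) (2 * k + 1) (by omega)
      (by rw [hm, hX]; omega) (fun j hj => by rw [hm, hX]; omega) (by omega)
    have := hev' M hM
    omega
end

section
/- (1) If m = 3, then for every integer k ≥ 2, every F-subspace A of E^k that is a cutting 1-blocking set of E^k satisfies dim_F(A) ≥ 2k (equivalently, ϖ_{E/F}(k,1) ≥ 2k). (2) If m = 4, then for every integer k ≥ 3, every F-subspace A of E^k that is a cutting 2-blocking set of E^k satisfies dim_F(A) ≥ 2k+3 (equivalently, ϖ_{E/F}(k,2) ≥ 2k+3). -/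
open Submodule Pointwise

/-- `S` is a cutting `r`-blocking set of `L`: for every submodule `V` of codimension `r`,
the span of `S ∩ V` is all of `V`. -/
def IsCuttingBlocking (R : Type*) {L : Type*} [DivisionRing R] [AddCommGroup L] [Module R L]
    (S : Set L) (r : ℕ) : Prop :=
  ∀ V : Submodule R L, Module.finrank R V = Module.finrank R L - r →
    Submodule.span R (S ∩ (V : Set L)) = V

section helpers

universe u v w

/-- Subspaces of every intermediate dimension exist. -/
theorem exists_between_finrank {F : Type u} {V : Type w} [Field F] [AddCommGroup V] [Module F V]
    [FiniteDimensional F V] (U W : Submodule F V) (hUW : U ≤ W) (n : ℕ)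
    (h1 : Module.finrank F U ≤ n) (h2 : n ≤ Module.finrank F W) :
    ∃ X : Submodule F V, U ≤ X ∧ X ≤ W ∧ Module.finrank F X = n := by
  induction n, h1 using Nat.le_induction with
  | base => exact ⟨U, le_rfl, hUW, rfl⟩
  | succ n hn ih =>
    obtain ⟨X, hUX, hXW, hX⟩ := ih (by omega)
    have hlt : X < W := lt_of_le_of_ne hXW (by rintro rfl; omega)
    obtain ⟨w, hwW, hwX⟩ := SetLike.exists_of_lt hlt
    refine ⟨X ⊔ span F {w}, hUX.trans le_sup_left,
      sup_le hXW ((span_singleton_le_iff_mem _ _).2 hwW), ?_⟩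
    have h3 : X < X ⊔ span F {w} := by
      refine lt_of_le_of_ne le_sup_left fun h => hwX ?_
      rw [h]
      exact mem_sup_right (mem_span_singleton_self w)
    have h4 := Submodule.finrank_lt_finrank_of_lt h3
    have h5 := Submodule.finrank_add_le_finrank_add_finrank X (span F {w})
    have h6 : Module.finrank F (span F {w}) ≤ 1 := by
      simpa using finrank_span_le_card (R := F) ({w} : Set V)
    omega

/-- A small perturbation of an injective linear map is injective. -/
theorem exists_perturb {F : Type u} {U : Type v} {E : Type w} [Field F] [Infinite F]
    [AddCommGroup U] [Module F U] [FiniteDimensional F U] [AddCommGroup E] [Module F E]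
    (T S : U →ₗ[F] E) (hT : LinearMap.ker T = ⊥) :
    ∃ c : F, c ≠ 0 ∧ ∀ u, T u + c • S u = 0 → u = 0 := by
  obtain ⟨L, hL⟩ := LinearMap.exists_leftInverse_of_injective T hT
  let N : Module.End F U := L ∘ₗ S
  have hfin : ({0} ∪ {μ | N.HasEigenvalue μ}).Finite :=
    (Set.finite_singleton 0).union N.finite_hasEigenvalue
  obtain ⟨μ, hμ⟩ := hfin.exists_notMem
  simp only [Set.mem_union, Set.mem_singleton_iff, Set.mem_ofPred_eq, not_or] at hμ
  refine ⟨-μ⁻¹, neg_ne_zero.2 (inv_ne_zero hμ.1), fun u hu => ?_⟩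
  by_contra hu0
  apply hμ.2
  refine Module.End.hasEigenvalue_of_hasEigenvector (x := u) ⟨?_, hu0⟩
  rw [Module.End.mem_eigenspace_iff]
  have h := congrArg L hu
  have h2 : L (T u) = u := LinearMap.congr_fun hL u
  simp only [map_add, map_smul, h2, map_zero] at h
  have h3 : u = μ⁻¹ • N u := by
    have : u - μ⁻¹ • L (S u) = 0 := by rw [← h]; module
    exact sub_eq_zero.1 this
  calc N u = μ • (μ⁻¹ • N u) := by rw [smul_smul, mul_inv_cancel₀ hμ.1, one_smul]
    _ = μ • u := by rw [← h3]

variable {F : Type u} {E : Type v} [Field F] [Field E] [Algebra F E] [FiniteDimensional F E]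

theorem exists_inj_infinite [Infinite F] {V : Type w} [AddCommGroup V] [Module E V] [Module F V]
    [IsScalarTower F E V] [FiniteDimensional F V] (B : Submodule F V)
    (hB : Module.finrank F B ≤ Module.finrank F E) :
    ∃ φ : V →ₗ[E] E, ∀ b ∈ B, φ b = 0 → b = 0 := by
  obtain ⟨U, ⟨hUB, φ, hφ⟩, hmax⟩ := (wellFounded_gt (α := Submodule F V)).has_min
    {U | U ≤ B ∧ ∃ φ : V →ₗ[E] E, ∀ b ∈ U, φ b = 0 → b = 0} ⟨⊥, bot_le, 0, by simp⟩
  rcases eq_or_lt_of_le hUB with rfl | hlt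
  · exact ⟨φ, hφ⟩
  exfalso
  obtain ⟨b₀, hb₀B, hb₀U⟩ := SetLike.exists_of_lt hlt
  have key : ∀ b ∈ B, b ∉ U → ∀ χ : V →ₗ[E] E,
      (∀ u ∈ U, ∀ x : F, χ (u + x • b) = 0 → u + x • b = 0) → False := by
    intro b hbB hbU χ hχ
    refine hmax (U ⊔ span F {b}) ⟨sup_le hUB ((span_singleton_le_iff_mem _ _).2 hbB), χ, ?_⟩ ?_
    · intro y hy
      obtain ⟨u, hu, z, hz, rfl⟩ := mem_sup.1 hy
      obtain ⟨x, rfl⟩ := mem_span_singleton.1 hz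
      exact hχ u hu x
    · refine lt_of_le_of_ne le_sup_left fun h => hbU ?_
      rw [h]
      exact mem_sup_right (mem_span_singleton_self b)
  have hb : ∃ b ∈ B, b ∉ U ∧ φ b = 0 := by
    by_contra hcon
    push Not at hcon
    refine key b₀ hb₀B hb₀U φ fun u hu x h => ?_
    have hmem : u + x • b₀ ∈ B := B.add_mem (hUB hu) (B.smul_mem x hb₀B)
    by_cases hin : u + x • b₀ ∈ U
    · exact hφ _ hin h
    · exact absurd h (hcon _ hmem hin)
  obtain ⟨b, hbB, hbU, hφb⟩ := hb
  have hb0 : b ≠ 0 := by rintro rfl; exact hbU U.zero_mem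
  let f : U →ₗ[F] E := (φ.restrictScalars F) ∘ₗ U.subtype
  have hr : Module.finrank F (LinearMap.range f) < Module.finrank F E :=
    (LinearMap.finrank_range_le f).trans_lt
      ((Submodule.finrank_lt_finrank_of_lt hlt).trans_le hB)
  obtain ⟨e, he⟩ : ∃ e : E, e ∉ LinearMap.range f := by
    by_contra hcon
    push Not at hcon
    rw [(Submodule.eq_top_iff'.2 hcon), finrank_top] at hr
    exact lt_irrefl _ hr
  obtain ⟨ψ₁, hψ₁⟩ := Module.Projective.exists_dual_eq_one E hb0
  let ψ : V →ₗ[E] E := e • ψ₁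
  have hψ : ψ b = e := by simp [ψ, hψ₁]
  let T : (U × F) →ₗ[F] E := f.coprod (LinearMap.toSpanSingleton F E e)
  let S : (U × F) →ₗ[F] E := ((ψ.restrictScalars F) ∘ₗ U.subtype) ∘ₗ LinearMap.fst F U F
  have hTa : ∀ (u : U) (x : F), T (u, x) = φ u + x • e := by intro u x; simp [T, f]
  have hSa : ∀ (u : U) (x : F), S (u, x) = ψ u := by intro u x; simp [S]
  have hT : LinearMap.ker T = ⊥ := by
    rw [LinearMap.ker_eq_bot']
    rintro ⟨u, x⟩ h
    rw [hTa] at h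
    have hx : x = 0 := by
      by_contra hx
      apply he
      refine ⟨-x⁻¹ • u, ?_⟩
      have h1 : f u = - (x • e) := eq_neg_of_add_eq_zero_left h
      rw [map_smul, h1, smul_neg, neg_smul, neg_neg, smul_smul, inv_mul_cancel₀ hx, one_smul]
    subst hx
    have := hφ u u.2 (by simpa using h)
    ext <;> simp [this]
  obtain ⟨c, hc, hinj⟩ := exists_perturb T S hT
  refine key b hbB hbU (φ + algebraMap F E c • ψ) fun u hu x h => ?_
  have h2 := hinj (⟨u, hu⟩, c * x) (by
    rw [hTa, hSa, ← h]
    have e1 : ∀ χ : V →ₗ[E] E, χ (x • b) = x • χ b := fun χ => (χ.restrictScalars F).map_smul x b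
    simp only [LinearMap.add_apply, LinearMap.smul_apply, map_add, e1, hφb, hψ, algebraMap_smul,
      smul_zero, smul_add, smul_smul, mul_comm x c]
    abel)
  rw [Prod.mk_eq_zero] at h2
  have hu0 : u = 0 := congrArg Subtype.val h2.1
  have hx0 : x = 0 := (mul_eq_zero.1 h2.2).resolve_left hc
  simp [hu0, hx0]

theorem exists_inj_finite [Finite F] {V : Type w} [AddCommGroup V] [Module E V] [Module F V]
    [IsScalarTower F E V] [FiniteDimensional F V] [FiniteDimensional E V] (B : Submodule F V)
    (hB : Module.finrank F B ≤ Module.finrank F E) :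
    ∃ φ : V →ₗ[E] E, ∀ b ∈ B, φ b = 0 → b = 0 := by
  classical
  by_contra hcon
  push Not at hcon
  have : Finite E := Module.finite_of_finite F
  have : Finite V := Module.finite_of_finite F
  have : Finite (V →ₗ[E] E) := Module.finite_of_finite E
  have := Fintype.ofFinite F
  have := Fintype.ofFinite E
  have := Fintype.ofFinite V
  have := Fintype.ofFinite B
  have := Fintype.ofFinite (V →ₗ[E] E)
  have hcard : ∀ b : V, b ≠ 0 →
      (Finset.univ.filter fun φ : V →ₗ[E] E => φ b = 0).card * Fintype.card E
        = Fintype.card (V →ₗ[E] E) := by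
    intro b hb
    let ev : (V →ₗ[E] E) →ₗ[E] E := LinearMap.applyₗ b
    have hs : Function.Surjective ev := by
      obtain ⟨ψ, hψ⟩ := Module.Projective.exists_dual_eq_one E hb
      intro e
      exact ⟨e • ψ, by simp [ev, hψ]⟩
    have h1 := Submodule.card_eq_card_quotient_mul_card (LinearMap.ker ev)
    rw [Nat.card_congr (ev.quotKerEquivOfSurjective hs).toEquiv, Nat.card_eq_fintype_card,
      Nat.card_eq_fintype_card] at h1
    rw [h1, Nat.card_eq_fintype_card, Fintype.card_subtype]
    rfl
  have hBE : Fintype.card B ≤ Fintype.card E := by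
    rw [Module.card_eq_pow_finrank (K := F) (V := B), Module.card_eq_pow_finrank (K := F) (V := E)]
    exact Nat.pow_le_pow_right Fintype.card_pos hB
  let Bs : Finset B := Finset.univ.erase 0
  have hBs : Bs.card + 1 ≤ Fintype.card E := by
    have : Bs.card + 1 = Fintype.card B := Finset.card_erase_add_one (Finset.mem_univ _)
    omega
  have hcov : (Finset.univ : Finset (V →ₗ[E] E)) ⊆
      Bs.biUnion fun b => Finset.univ.filter fun φ : V →ₗ[E] E => φ b = 0 := by
    intro φ _
    obtain ⟨b, hb, h0, hne⟩ := hcon φ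
    simp only [Finset.mem_biUnion, Finset.mem_filter, Finset.mem_univ, true_and]
    refine ⟨⟨b, hb⟩, ?_, h0⟩
    simp [Bs, hne]
  have h1 := (Finset.card_le_card hcov).trans Finset.card_biUnion_le
  rw [Finset.card_univ] at h1
  have h2 : (∑ b ∈ Bs, (Finset.univ.filter fun φ : V →ₗ[E] E => φ b = 0).card) * Fintype.card E
      = Bs.card * Fintype.card (V →ₗ[E] E) := by
    rw [Finset.sum_mul, Finset.sum_congr rfl (fun b hb => hcard b.1 (fun h =>
      (Finset.mem_erase.1 hb).1 (Subtype.ext h))), Finset.sum_const,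
      smul_eq_mul]
  have h3 := Nat.mul_le_mul_right (Fintype.card E) h1
  rw [h2, mul_comm] at h3
  have h4 : Fintype.card E ≤ Bs.card :=
    Nat.le_of_mul_le_mul_right h3 Fintype.card_pos
  omega

theorem exists_inj {V : Type w} [AddCommGroup V] [Module E V] [Module F V]
    [IsScalarTower F E V] [FiniteDimensional F V] [FiniteDimensional E V] (B : Submodule F V)
    (hB : Module.finrank F B ≤ Module.finrank F E) :
    ∃ φ : V →ₗ[E] E, ∀ b ∈ B, φ b = 0 → b = 0 := by
  rcases finite_or_infinite F with h | h
  · exact exists_inj_finite B hB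
  · exact exists_inj_infinite B hB

/-- A subspace of dimension at most `m * n` in `E^(n+1)` misses a point. -/
theorem exists_missed (n : ℕ) : ∀ {V : Type w} [AddCommGroup V] [Module E V] [Module F V]
    [IsScalarTower F E V] [FiniteDimensional F V] [FiniteDimensional E V] (B : Submodule F V),
    Module.finrank E V = n + 1 → Module.finrank F B ≤ Module.finrank F E * n →
    ∃ v : V, v ≠ 0 ∧ ∀ e : E, e • v ∈ B → e • v = 0 := by
  induction n with
  | zero =>
    intro V _ _ _ _ _ _ B hV hB
    have : Nontrivial V := Module.nontrivial_of_finrank_pos (R := E) (by omega)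
    obtain ⟨v, hv⟩ := exists_ne (0 : V)
    refine ⟨v, hv, fun e he => ?_⟩
    have : B = ⊥ := Submodule.finrank_eq_zero.1 (by omega)
    rwa [this, Submodule.mem_bot] at he
  | succ n ih =>
    intro V _ _ _ _ _ _ B hV hB
    by_cases hle : Module.finrank F B ≤ Module.finrank F E
    · obtain ⟨φ, hφ⟩ := exists_inj (E := E) B hle
      have h1 := φ.finrank_range_add_finrank_ker
      have h2 : Module.finrank E (LinearMap.range φ) ≤ 1 := by
        simpa using Submodule.finrank_le (LinearMap.range φ)
      have : Nontrivial (LinearMap.ker φ) :=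
        Module.nontrivial_of_finrank_pos (R := E) (by omega)
      obtain ⟨v, hv⟩ := exists_ne (0 : LinearMap.ker φ)
      refine ⟨v, fun h => hv (Subtype.ext h), fun e he => hφ _ he ?_⟩
      rw [map_smul, LinearMap.mem_ker.1 v.2, smul_zero]
    · obtain ⟨B₁, -, hB₁, hfr⟩ := exists_between_finrank ⊥ B bot_le (Module.finrank F E)
        (by simp) (by omega)
      obtain ⟨φ, hφ⟩ := exists_inj (E := E) B₁ hfr.le
      let f : B →ₗ[F] E := (φ.restrictScalars F) ∘ₗ B.subtype
      let g : B₁ →ₗ[F] E := (φ.restrictScalars F) ∘ₗ B₁.subtype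
      have hg : Function.Injective g := by
        rw [← LinearMap.ker_eq_bot, LinearMap.ker_eq_bot']
        intro b hb
        exact Subtype.ext (hφ b b.2 hb)
      have hgr := LinearMap.finrank_range_of_inj hg
      have hgf : LinearMap.range g ≤ LinearMap.range f := by
        rintro _ ⟨b, rfl⟩
        exact ⟨⟨b, hB₁ b.2⟩, rfl⟩
      have h1 := Submodule.finrank_mono hgf
      have h2 := f.finrank_range_add_finrank_ker
      have hpos : 0 < Module.finrank F E := Module.finrank_pos
      have hφs : Function.Surjective φ := by
        have : LinearMap.range g = ⊤ := Submodule.eq_top_of_finrank_eq (by omega)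
        intro e
        obtain ⟨b, hb⟩ := LinearMap.range_eq_top.1 this e
        exact ⟨b, hb⟩
      have h3 := φ.finrank_range_add_finrank_ker
      rw [LinearMap.range_eq_top.2 hφs, finrank_top, Module.finrank_self] at h3
      let ι : LinearMap.ker φ →ₗ[F] V := (LinearMap.ker φ).subtype.restrictScalars F
      have : FiniteDimensional F (LinearMap.ker φ) :=
        FiniteDimensional.of_injective ι Subtype.val_injective
      let B' : Submodule F (LinearMap.ker φ) := B.comap ι
      let j : B' →ₗ[F] LinearMap.ker f :=
        { toFun := fun x => ⟨⟨x.1.1, x.2⟩, x.1.2⟩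
          map_add' := fun _ _ => rfl
          map_smul' := fun _ _ => rfl }
      have hj : Function.Injective j := by
        intro x y h
        have : x.1.1 = y.1.1 := congrArg (fun z => z.1.1) h
        exact Subtype.ext (Subtype.ext this)
      have h4 := LinearMap.finrank_le_finrank_of_injective hj
      obtain ⟨v, hv, hvB⟩ := ih B' (by omega) (by
        rw [Nat.mul_succ] at hB
        omega)
      refine ⟨v, fun h => hv (Subtype.ext h), fun e he => ?_⟩
      exact congrArg Subtype.val (hvB e he)

theorem cutting_base {V : Type w} [AddCommGroup V] [Module E V] [Module F V]
    [IsScalarTower F E V] [FiniteDimensional F V] [FiniteDimensional E V] (r : ℕ)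
    (A : Submodule F V) (hV : Module.finrank E V = r + 1)
    (hA : IsCuttingBlocking E (A : Set V) r) :
    Module.finrank F E * r + 1 ≤ Module.finrank F A := by
  by_contra hcon
  obtain ⟨v, hv, hvA⟩ := exists_missed (E := E) r A hV (by omega)
  have h := hA (span E {v}) (by rw [finrank_span_singleton hv]; omega)
  have h0 : span E ((A : Set V) ∩ (span E {v} : Submodule E V)) ≤ ⊥ := by
    rw [span_le]
    rintro x ⟨hxA, hxv⟩
    obtain ⟨e, rfl⟩ := mem_span_singleton.1 hxv
    exact hvA e hxA
  rw [h, le_bot_iff, span_singleton_eq_bot] at h0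
  exact hv h0

theorem cutting_mono {V : Type w} [AddCommGroup V] [Module E V] {r : ℕ} {S T : Set V}
    (h : S ⊆ T) (hS : IsCuttingBlocking E S r) : IsCuttingBlocking E T r := by
  intro W hW
  apply le_antisymm
  · exact span_le.2 Set.inter_subset_right
  · calc W = span E (S ∩ W) := (hS W hW).symm
      _ ≤ _ := span_mono (Set.inter_subset_inter_left _ h)

theorem cutting_quot {V : Type w} [AddCommGroup V] [Module E V] [FiniteDimensional E V]
    {r k : ℕ} {S : Set V} (b : V) (hb : b ≠ 0) (hV : Module.finrank E V = k + 1) (hk : r ≤ k)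
    (hS : IsCuttingBlocking E S r) :
    IsCuttingBlocking E ((span E {b}).mkQ '' S) r := by
  intro Q hQ
  have hq := (span E {b}).finrank_quotient_add_finrank
  rw [finrank_span_singleton hb, hV] at hq
  have hrange : LinearMap.range ((span E {b}).mkQ) = ⊤ := Submodule.range_mkQ _
  have hmap : (Q.comap (span E {b}).mkQ).map (span E {b}).mkQ = Q :=
    Submodule.map_comap_eq_of_surjective (Submodule.mkQ_surjective _) Q
  have hdim : Module.finrank E (Q.comap (span E {b}).mkQ) = Module.finrank E V - r := by
    let f : Q.comap (span E {b}).mkQ →ₗ[E] (V ⧸ span E {b}) :=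
      (span E {b}).mkQ ∘ₗ Submodule.subtype _
    have h1 := f.finrank_range_add_finrank_ker
    have h2 : LinearMap.range f = Q := by
      rw [LinearMap.range_comp, Submodule.range_subtype, hmap]
    have h3 : LinearMap.ker f = (span E {b}).comap (Submodule.subtype _) := by
      rw [LinearMap.ker_comp, Submodule.ker_mkQ]
    have hle : span E {b} ≤ Q.comap (span E {b}).mkQ := Submodule.le_comap_mkQ _ _
    rw [h2, h3, (Submodule.comapSubtypeEquivOfLe hle).finrank_eq, finrank_span_singleton hb] at h1
    omega
  apply le_antisymm
  · exact span_le.2 Set.inter_subset_right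
  · calc Q = (Q.comap (span E {b}).mkQ).map (span E {b}).mkQ := hmap.symm
      _ = (span E (S ∩ (Q.comap (span E {b}).mkQ : Submodule E V))).map (span E {b}).mkQ := by
        rw [hS _ hdim]
      _ ≤ _ := by
        rw [Submodule.map_span]
        apply span_mono
        rintro _ ⟨x, ⟨hxS, hxQ⟩, rfl⟩
        exact ⟨⟨x, hxS, rfl⟩, hxQ⟩

/-- If `2 * dim A > dim V` then some `E`-point meets `A` in dimension at least two. -/
theorem exists_heavy {V : Type w} [AddCommGroup V] [Module E V] [Module F V]
    [IsScalarTower F E V] [FiniteDimensional F V] (hm : 1 < Module.finrank F E)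
    (A : Submodule F V) (hA : Module.finrank F V < 2 * Module.finrank F A) :
    ∃ b : V, b ≠ 0 ∧ b ∈ A ∧ ∃ l : E, (∀ c : F, algebraMap F E c ≠ l) ∧ l • b ∈ A := by
  obtain ⟨l, hl⟩ : ∃ l : E, ∀ c : F, algebraMap F E c ≠ l := by
    by_contra hcon
    push Not at hcon
    have : Module.finrank F E ≤ 1 := finrank_le_one (1 : E) fun w => by
      obtain ⟨c, hc⟩ := hcon w
      exact ⟨c, by rw [← hc, Algebra.algebraMap_eq_smul_one]⟩
    omega
  have hl0 : l ≠ 0 := fun h => hl 0 (by simp [h])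
  let μ : V →ₗ[F] V := (LinearMap.lsmul E V l).restrictScalars F
  have hμ : Function.Injective μ := fun x y h => smul_right_injective V hl0 h
  have h1 : Module.finrank F (A.map μ) = Module.finrank F A :=
    (Submodule.equivMapOfInjective μ hμ A).finrank_eq.symm
  have h2 : ¬ Disjoint (A.map μ) A := by
    intro hd
    have := Submodule.finrank_add_finrank_le_of_disjoint hd
    omega
  rw [Submodule.disjoint_def] at h2
  push Not at h2
  obtain ⟨x, ⟨b, hbA, rfl⟩, hxA, hx0⟩ := h2
  exact ⟨b, by rintro rfl; simp at hx0, hbA, l, hl, hxA⟩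

theorem cutting_main (r d : ℕ) (hm : 1 < Module.finrank F E)
    (hbase : 2 * (r + 1) + d ≤ Module.finrank F E * r + 1)
    (hle : ∀ k, r + 1 < k →
      2 * k + d - 1 ≤ Module.finrank F E * k ∧ Module.finrank F E * k < 2 * (2 * k + d - 1))
    (k : ℕ) (hk : r + 1 ≤ k) : ∀ {V : Type w} [AddCommGroup V] [Module E V] [Module F V]
    [IsScalarTower F E V] [FiniteDimensional F V] [FiniteDimensional E V] (A : Submodule F V),
    Module.finrank E V = k → IsCuttingBlocking E (A : Set V) r →
    2 * k + d ≤ Module.finrank F A := by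
  induction k, hk using Nat.le_induction with
  | base =>
    intro V _ _ _ _ _ _ A hV hA
    exact hbase.trans (cutting_base r A hV hA)
  | succ k hk ih =>
    intro V _ _ _ _ _ _ A hV hA
    by_contra hcon
    obtain ⟨hl1, hl2⟩ := hle (k + 1) (by omega)
    have hFV : Module.finrank F V = Module.finrank F E * (k + 1) := by
      rw [← hV, Module.finrank_mul_finrank]
    obtain ⟨A', hAA', -, hfr⟩ := exists_between_finrank A ⊤ le_top (2 * (k + 1) + d - 1)
      (by omega) (by rw [finrank_top]; omega)
    have hA' : IsCuttingBlocking E (A' : Set V) r := cutting_mono hAA' hA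
    obtain ⟨b, hb, hbA, l, hl, hlA⟩ := exists_heavy (E := E) hm A' (by omega)
    have hq := (span E {b}).finrank_quotient_add_finrank
    rw [finrank_span_singleton hb, hV] at hq
    let π : V →ₗ[F] (V ⧸ span E {b}) := (span E {b}).mkQ.restrictScalars F
    have hπ : Function.Surjective π := fun y => Submodule.mkQ_surjective (span E {b}) y
    have : FiniteDimensional F (V ⧸ span E {b}) := Module.Finite.of_surjective π hπ
    have h1 := ih (A'.map π) (by omega) (by
      have := cutting_quot b hb hV (by omega) hA'
      exact this)
    let f : A' →ₗ[F] (V ⧸ span E {b}) := π ∘ₗ A'.subtype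
    have h2 := f.finrank_range_add_finrank_ker
    have h3 : LinearMap.range f = A'.map π := by
      rw [LinearMap.range_comp, Submodule.range_subtype]
    rw [h3] at h2
    have h4 : 2 ≤ Module.finrank F (LinearMap.ker f) := by
      have hz : ∀ e : E, π (e • b) = 0 := fun e =>
        (Submodule.Quotient.mk_eq_zero _).2 (smul_mem _ _ (mem_span_singleton_self b))
      let x : LinearMap.ker f := ⟨⟨b, hbA⟩, by
        have h9 := hz 1
        rw [one_smul] at h9
        exact h9⟩
      let y : LinearMap.ker f := ⟨⟨l • b, hlA⟩, hz l⟩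
      have hli : LinearIndependent F ![x, y] := by
        rw [LinearIndependent.pair_iff]
        intro s t hst
        have h5 : s • b + t • l • b = 0 := congrArg (fun z => z.1.1) hst
        have h6 : (algebraMap F E s + algebraMap F E t * l) • b = 0 := by
          rw [add_smul, mul_smul, algebraMap_smul, algebraMap_smul, h5]
        have h7 := (smul_eq_zero.1 h6).resolve_right hb
        have ht : t = 0 := by
          by_contra ht
          apply hl (-s / t)
          have ht' : algebraMap F E t ≠ 0 := by simpa using ht
          rw [map_div₀, map_neg, div_eq_iff ht']
          linear_combination -h7
        subst ht
        refine ⟨?_, rfl⟩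
        simpa using h7
      simpa using hli.fintype_card_le_finrank
    omega

end helpers

/-- Theorem 5.3: (1) if `m = 3`, then for every `k ≥ 2`, every `F`-subspace of `E^k` that
is a cutting `1`-blocking set has `F`-dimension at least `2k`; (2) if `m = 4`, then for
every `k ≥ 3`, every `F`-subspace of `E^k` that is a cutting `2`-blocking set has
`F`-dimension at least `2k + 3`. -/
theorem statement17 (F E : Type*) [Field F] [Field E] [Algebra F E]
    [FiniteDimensional F E] (m : ℕ) (hm : Module.finrank F E = m) :
    (m = 3 → ∀ k : ℕ, 2 ≤ k → ∀ A : Submodule F (Fin k → E),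
        IsCuttingBlocking E (A : Set (Fin k → E)) 1 → 2 * k ≤ Module.finrank F A) ∧
      (m = 4 → ∀ k : ℕ, 3 ≤ k → ∀ A : Submodule F (Fin k → E),
        IsCuttingBlocking E (A : Set (Fin k → E)) 2 → 2 * k + 3 ≤ Module.finrank F A) := by
  constructor
  · rintro rfl k hk A hA
    exact cutting_main (F := F) (E := E) 1 0 (by omega) (by omega)
      (fun k hk => by rw [hm]; omega) k hk A (by simp) hA
  · rintro rfl k hk A hA
    exact cutting_main (F := F) (E := E) 2 3 (by omega) (by omega)
      (fun k hk => by rw [hm]; omega) k hk A (by simp) hA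
end

section
/- Suppose F is a finite field with |F| = q (so E is finite with |E| = q^m). Let (n,r) ∈ ℕ² with n ≥ r+1. Then the number of (r+1)-dimensional E-subspaces C of E^n that are r-minimal, multiplied by δ_{q^m}(r+1, r+1), equals Σ_{i=mr+1}^{m(r+1)} δ_q(m(r+1), i) · bin_q(n, i). -/
open Submodule Pointwise

/-- `D` is rank minimal in `C`: any subcode `B ≤ C` of the same dimension with
`χ(B) ⊆ χ(D)` satisfies `χ(B) = χ(D)`. -/
def RankMinimal (F E : Type*) [Field F] [Field E] [Algebra F E] (n : ℕ)
    (C D : Submodule E (Fin n → E)) : Prop :=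
  ∀ B : Submodule E (Fin n → E), B ≤ C → Module.finrank E B = Module.finrank E D →
    rankSupport F E n (B : Set (Fin n → E)) ≤ rankSupport F E n (D : Set (Fin n → E)) →
    rankSupport F E n (B : Set (Fin n → E)) = rankSupport F E n (D : Set (Fin n → E))

/-- `C` is `r`-minimal with respect to the rank metric. -/
def IsRMinimal (F E : Type*) [Field F] [Field E] [Algebra F E] (n : ℕ)
    (C : Submodule E (Fin n → E)) (r : ℕ) : Prop :=
  ∀ D : Submodule E (Fin n → E), D ≤ C → Module.finrank E D = r → RankMinimal F E n C D

/-- The `a`-binomial coefficient `bin_a(n, r)` (as a real number). -/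
noncomputable def qbin (a : ℝ) (n r : ℕ) : ℝ :=
  if r ≤ n then ∏ i ∈ Finset.Icc 1 r, (a ^ (i + n - r) - 1) / (a ^ i - 1) else 0

/-- `δ_a(n, r) = ∏_{i=0}^{r-1} (a^n - a^i)` (as a real number). -/
noncomputable def qdelta (a : ℝ) (n r : ℕ) : ℝ :=
  ∏ i ∈ Finset.range r, (a ^ n - a ^ i)

theorem aux_delta_succ (a : ℝ) (n i : ℕ) :
    qdelta a (n+1) (i+1) = (a^(n+1) - 1) * a^i * qdelta a n i := by
  unfold qdelta
  rw [Finset.prod_range_succ']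
  have : ∀ j ∈ Finset.range i, a^(n+1) - a^(j+1) = a * (a^n - a^j) := by
    intro j _; ring
  rw [Finset.prod_congr rfl this, Finset.prod_mul_distrib]
  simp
  ring

theorem aux_delta_right (a : ℝ) (n i : ℕ) :
    qdelta a n (i+1) = qdelta a n i * (a^n - a^i) := by
  unfold qdelta
  rw [Finset.prod_range_succ]

theorem aux_delta_ne (a : ℝ) (ha : 1 < a) (i : ℕ) : qdelta a i i ≠ 0 := by
  unfold qdelta
  rw [Finset.prod_ne_zero_iff]
  intro j hj
  have := pow_lt_pow_right₀ ha (Finset.mem_range.1 hj)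
  linarith

theorem aux_bin (a : ℝ) (ha : 1 < a) (n r : ℕ) :
    qbin a n r = qdelta a n r / qdelta a r r := by
  unfold qbin
  split_ifs with h
  · unfold qdelta
    rw [← Finset.prod_div_distrib]
    have hI : Finset.Icc 1 r = (Finset.range r).image (fun j => r - j) := by
      ext x
      simp only [Finset.mem_Icc, Finset.mem_image, Finset.mem_range]
      constructor
      · rintro ⟨h1, h2⟩
        exact ⟨r - x, by omega, by omega⟩
      · rintro ⟨y, hy, rfl⟩
        omega
    rw [hI, Finset.prod_image]
    · apply Finset.prod_congr rfl
      intro j hj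
      have hj := Finset.mem_range.1 hj
      have e1 : r - j + n - r = n - j := by omega
      have e2 : a^n - a^j = a^j * (a^(n-j) - 1) := by
        rw [mul_sub, ← pow_add]; congr 2 <;> [omega; ring]
      have e3 : a^r - a^j = a^j * (a^(r-j) - 1) := by
        rw [mul_sub, ← pow_add]; congr 2 <;> [omega; ring]
      rw [e1, e2, e3, mul_div_mul_left]
      positivity
    · intro x hx y hy hxy
      simp at hx hy hxy
      omega
  · have : qdelta a n r = 0 := by
      unfold qdelta
      apply Finset.prod_eq_zero (Finset.mem_range.2 (not_le.1 h))
      simp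
    simp [this]

theorem aux_bin_succ (a : ℝ) (ha : 1 < a) (n i : ℕ) :
    qbin a (n+1) (i+1) = a^(i+1) * qbin a n (i+1) + qbin a n i := by
  simp only [aux_bin a ha]
  have h1 := aux_delta_ne a ha (i+1)
  have h2 := aux_delta_ne a ha i
  have h3 := aux_delta_succ a n i
  have h4 := aux_delta_succ a i i
  have h5 := aux_delta_right a n i
  have h6 : a ^ (i+1) - 1 ≠ 0 := by
    have := one_lt_pow₀ ha (Nat.succ_ne_zero i); simp only [Nat.succ_eq_add_one] at this; linarith
  have h7 : a ^ i ≠ 0 := by positivity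
  rw [h3, h4, h5]
  field_simp
  ring

theorem aux_bin_zero (a : ℝ) (n : ℕ) : qbin a n 0 = 1 := by simp [qbin]

theorem aux_bin_zero_succ (a : ℝ) (i : ℕ) : qbin a 0 (i+1) = 0 := by simp [qbin]

section counting
variable {K V : Type*} [Field K] [Fintype K] [AddCommGroup V] [Module K V] [FiniteDimensional K V]

open Classical in
theorem aux_finrank_cons (n : ℕ) (g : Fin n → V) (x : V) :
    Module.finrank K (span K (Set.range (Fin.cons x g : Fin (n+1) → V))) =
      if x ∈ span K (Set.range g) then Module.finrank K (span K (Set.range g))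
      else Module.finrank K (span K (Set.range g)) + 1 := by
  rw [Fin.range_cons]
  split_ifs with h
  · rw [Submodule.span_insert_eq_span h]
  · have hx : x ≠ 0 := by rintro rfl; exact h (zero_mem _)
    rw [Submodule.span_insert]
    have := Submodule.finrank_sup_add_finrank_inf_eq (span K {x}) (span K (Set.range g))
    have hd : span K {x} ⊓ span K (Set.range g) = ⊥ := by
      rw [← disjoint_iff]
      exact (Submodule.disjoint_span_singleton' hx).2 h |>.symm
    rw [hd, finrank_bot, finrank_span_singleton hx] at this
    omega

theorem aux_count_s18 (q : ℕ) (hq : Fintype.card K = q) (n i : ℕ) :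
    (Nat.card {g : Fin n → V // Module.finrank K (span K (Set.range g)) = i} : ℝ) =
      qdelta (q:ℝ) (Module.finrank K V) i * qbin q n i := by
  classical
  have hq1 : (1:ℝ) < q := by
    have := Fintype.one_lt_card (α := K); rw [hq] at this; exact_mod_cast this
  have : Finite V := Module.finite_of_finite K
  have := Fintype.ofFinite V
  have cardS : ∀ S : Submodule K V, (Fintype.card S : ℝ) = (q:ℝ)^(Module.finrank K S) := by
    intro S
    rw [Module.card_eq_pow_finrank (K := K), hq]; push_cast; rfl
  have cardV : (Fintype.card V : ℝ) = (q:ℝ)^(Module.finrank K V) := by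
    rw [Module.card_eq_pow_finrank (K := K), hq]; push_cast; rfl
  induction n generalizing i with
  | zero =>
    cases i with
    | zero =>
      rw [aux_bin_zero]
      simp [qdelta]
    | succ i =>
      rw [aux_bin_zero_succ, mul_zero, Nat.cast_eq_zero]
      have : IsEmpty {g : Fin 0 → V // Module.finrank K (span K (Set.range g)) = i + 1} := by
        constructor
        rintro ⟨g, hg⟩
        rw [Set.range_eq_empty, Submodule.span_empty, finrank_bot] at hg
        omega
      exact Nat.card_of_isEmpty
  | succ n ih =>
    have key : (Nat.card {g : Fin (n+1) → V // Module.finrank K (span K (Set.range g)) = i} : ℝ) =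
       ∑ g : Fin n → V, ∑ x : V, if Module.finrank K (span K (Set.range (Fin.cons x g : Fin (n+1) → V))) = i then (1:ℝ) else 0 := by
      rw [Nat.card_eq_fintype_card, Fintype.card_subtype, Finset.card_filter]
      push_cast
      rw [← (Fin.consEquiv (fun _ => V)).sum_comp, Fintype.sum_prod_type_right]
      rfl
    have ih' : ∀ i, (∑ g : Fin n → V, if Module.finrank K (span K (Set.range g)) = i then (1:ℝ) else 0) = qdelta (q:ℝ) (Module.finrank K V) i * qbin q n i := by
      intro i
      rw [← ih, Nat.card_eq_fintype_card, Fintype.card_subtype, Finset.card_filter]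
      push_cast
      rfl
    have inner : ∀ g : Fin n → V, (∑ x : V, if Module.finrank K (span K (Set.range (Fin.cons x g : Fin (n+1) → V))) = i then (1:ℝ) else 0)
       = (q:ℝ)^i * (if Module.finrank K (span K (Set.range g)) = i then (1:ℝ) else 0)
        + (if Module.finrank K (span K (Set.range g)) + 1 = i then ((q:ℝ)^(Module.finrank K V) - (q:ℝ)^(i-1)) else 0) := by
      intro g
      simp only [aux_finrank_cons]
      generalize span K (Set.range g) = S
      have c1 : (∑ x : V, if x ∈ S then (1:ℝ) else 0) = (q:ℝ)^(Module.finrank K S) := by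
        rw [← cardS, Fintype.card_subtype, Finset.card_filter]; push_cast; rfl
      have c2 : (∑ x : V, if x ∈ S then (0:ℝ) else 1) = (q:ℝ)^(Module.finrank K V) - (q:ℝ)^(Module.finrank K S) := by
        rw [← c1, ← cardV, eq_sub_iff_add_eq, ← Finset.sum_add_distrib]
        rw [Finset.sum_congr rfl (g := fun _ => (1:ℝ))]
        · simp
        · intro x _; split_ifs <;> simp
      by_cases h1 : Module.finrank K S = i
      · rw [if_pos h1, if_neg (by omega)]
        have h3 : (q:ℝ)^i = ∑ x : V, if x ∈ S then (1:ℝ) else 0 := by rw [c1, h1]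
        rw [mul_one, add_zero, h3]
        apply Finset.sum_congr rfl
        intro x _
        by_cases hx : x ∈ S <;> simp [hx, h1]
      · rw [if_neg h1]
        by_cases h2 : Module.finrank K S + 1 = i
        · rw [if_pos h2]
          have : i - 1 = Module.finrank K S := by omega
          rw [this, ← c2, mul_zero, zero_add]
          apply Finset.sum_congr rfl
          intro x _
          by_cases hx : x ∈ S <;> simp [hx, h1, h2]
        · rw [if_neg h2, mul_zero, zero_add]
          apply Finset.sum_eq_zero
          intro x _
          by_cases hx : x ∈ S <;> simp [hx, h1, h2]
    rw [key, Finset.sum_congr rfl (fun g _ => inner g), Finset.sum_add_distrib, ← Finset.mul_sum, ih']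
    cases i with
    | zero =>
      simp [aux_bin_zero, qdelta]
    | succ i =>
      rw [aux_bin_succ _ hq1, aux_delta_right]
      have : (∑ g : Fin n → V, if Module.finrank K (span K (Set.range g)) + 1 = i + 1 then ((q:ℝ)^(Module.finrank K V) - (q:ℝ)^(i+1-1)) else 0)
        = ((q:ℝ)^(Module.finrank K V) - (q:ℝ)^i) * (qdelta (q:ℝ) (Module.finrank K V) i * qbin q n i) := by
        rw [← ih', Finset.mul_sum]
        apply Finset.sum_congr rfl
        intro g _
        simp
      rw [this]
      ring

theorem aux_count_ge (q : ℕ) (hq : Fintype.card K = q) (n k : ℕ) :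
    (Nat.card {g : Fin n → V // k ≤ Module.finrank K (span K (Set.range g))} : ℝ) =
      ∑ i ∈ Finset.Icc k (Module.finrank K V), qdelta (q:ℝ) (Module.finrank K V) i * qbin q n i := by
  classical
  have : Finite V := Module.finite_of_finite K
  have := Fintype.ofFinite V
  rw [← Finset.sum_congr rfl (fun i _ => aux_count_s18 (V := V) q hq n i)]
  simp only [Nat.card_eq_fintype_card, Fintype.card_subtype]
  rw [← Nat.cast_sum]
  congr 1
  rw [Finset.card_eq_sum_card_fiberwise (f := fun g : Fin n → V => Module.finrank K (span K (Set.range g))) (t := Finset.Icc k (Module.finrank K V))]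
  · apply Finset.sum_congr rfl
    intro i hi
    congr 1
    ext g
    simp at hi ⊢
    omega
  · intro g hg
    simp at hg ⊢
    exact ⟨hg, Submodule.finrank_le _⟩

/-- Tuples spanning a subspace with property `P`. -/
theorem aux_tuples (k : ℕ) (P : Submodule K V → Prop) :
    (Nat.card {s : Fin k → V // LinearIndependent K s ∧ P (span K (Set.range s))} : ℝ) =
      Nat.card {C : Submodule K V // Module.finrank K C = k ∧ P C} *
        qdelta (Fintype.card K : ℝ) k k := by
  classical
  have : Finite V := Module.finite_of_finite K
  have := Fintype.ofFinite V
  let f : (Σ C : {C : Submodule K V // Module.finrank K C = k ∧ P C},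
      {t : Fin k → C.1 // LinearIndependent K t}) →
      {s : Fin k → V // LinearIndependent K s ∧ P (span K (Set.range s))} := fun p => 
    ⟨fun i => (p.2.1 i : V), by
      obtain ⟨⟨C, hC, hP⟩, t, ht⟩ := p
      have h1 : LinearIndependent K (fun i => (t i : V)) := ht.map' C.subtype C.ker_subtype
      refine ⟨h1, ?_⟩
      have : span K (Set.range (fun i => (t i : V))) = C := by
        apply Submodule.eq_of_le_of_finrank_eq
        · rw [Submodule.span_le]; rintro _ ⟨i, rfl⟩; exact (t i).2
        · rw [finrank_span_eq_card h1, hC]; simp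
      simpa only [this] using hP⟩
  have hspan : ∀ p, span K (Set.range (f p).1) = p.1.1 := by
    rintro ⟨⟨C, hC, hP⟩, t, ht⟩
    have h1 : LinearIndependent K (fun i => (t i : V)) := ht.map' C.subtype C.ker_subtype
    apply Submodule.eq_of_le_of_finrank_eq
    · rw [Submodule.span_le]; rintro _ ⟨i, rfl⟩; exact (t i).2
    · show Module.finrank K (span K (Set.range (fun i => (t i : V)))) = _
      rw [finrank_span_eq_card h1, hC]; simp
  have hf : Function.Bijective f := by
    constructor
    · intro p p' h
      have h1 : p.1.1 = p'.1.1 := by rw [← hspan, ← hspan, h]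
      obtain ⟨⟨C, hC, hP⟩, t, ht⟩ := p
      obtain ⟨⟨C', hC', hP'⟩, t', ht'⟩ := p'
      simp only at h1
      subst h1
      have : t = t' := by
        funext i
        apply Subtype.ext
        exact congrFun (congrArg Subtype.val h) i
      subst this
      rfl
    · rintro ⟨s, hs, hP⟩
      refine ⟨⟨⟨span K (Set.range s), ?_, hP⟩, fun i => ⟨s i, subset_span ⟨i, rfl⟩⟩, ?_⟩, rfl⟩
      · rw [finrank_span_eq_card hs]; simp
      · exact linearIndependent_span hs
  rw [← Nat.card_congr (Equiv.ofBijective f hf), Nat.card_sigma]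
  have hc : ∀ C : {C : Submodule K V // Module.finrank K C = k ∧ P C},
      (Nat.card {t : Fin k → C.1 // LinearIndependent K t} : ℝ) = qdelta (Fintype.card K : ℝ) k k := by
    rintro ⟨C, hC, hP⟩
    have := card_linearIndependent (K := K) (V := C) (k := k) hC.ge
    rw [this, hC, qdelta, Finset.prod_range]
    push_cast
    apply Finset.prod_congr rfl
    intro i _
    rw [Nat.cast_sub]
    · push_cast; rfl
    · exact Nat.pow_le_pow_right Fintype.card_pos i.2.le
  push_cast
  rw [Finset.sum_congr rfl (fun C _ => hc C)]
  simp [Nat.card_eq_fintype_card]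
end counting

section support
variable {F E : Type*} [Field F] [Field E] [Algebra F E] [FiniteDimensional F E] {n : ℕ}

theorem aux_mem_span (U : Submodule F (Fin n → F)) (a : Fin n → E) :
    a ∈ span E (fIncl F E n '' (U : Set (Fin n → F))) ↔
      ∀ l : E →ₗ[F] F, (fun j => l (a j)) ∈ U := by
  constructor
  · intro h
    induction h using Submodule.span_induction with
    | mem x hx =>
      obtain ⟨u, hu, rfl⟩ := hx
      intro l
      have : (fun j => l (fIncl F E n u j)) = l 1 • u := by
        funext j
        simp [fIncl, Algebra.algebraMap_eq_smul_one, mul_comm]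
      rw [this]
      exact U.smul_mem _ hu
    | zero => intro l; simp only [Pi.zero_apply, map_zero]; exact U.zero_mem
    | add x y _ _ hx hy =>
      intro l
      have := U.add_mem (hx l) (hy l)
      convert this using 1
      funext j; simp
    | smul e x _ hx =>
      intro l
      exact hx (l ∘ₗ LinearMap.mulLeft F e)
  · intro h
    let b := Module.finBasis F E
    have : a = ∑ k, b k • fIncl F E n (fun j => b.coord k (a j)) := by
      funext j
      rw [Finset.sum_apply]
      conv_lhs => rw [← b.sum_repr (a j)]
      apply Finset.sum_congr rfl
      intro k _
      simp [fIncl, Algebra.smul_def, mul_comm]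
    rw [this]
    exact Submodule.sum_mem _ (fun k _ => Submodule.smul_mem _ _ (subset_span ⟨_, h _, rfl⟩))

theorem aux_support_le (A : Set (Fin n → E)) (U : Submodule F (Fin n → F)) :
    rankSupport F E n A ≤ U ↔ ∀ a ∈ A, ∀ l : E →ₗ[F] F, (fun j => l (a j)) ∈ U := by
  have hmem : ∀ a ∈ A, ∀ l : E →ₗ[F] F, (fun j => l (a j)) ∈ rankSupport F E n A := by
    intro a ha l
    rw [rankSupport, Submodule.mem_sInf]
    intro W hW
    exact (aux_mem_span W a).1 (hW ha) l
  constructor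
  · intro h a ha l
    exact h (hmem a ha l)
  · intro h
    exact sInf_le (fun a ha => (aux_mem_span U a).2 (h a ha))

theorem aux_ann (A : Set (Fin n → E)) (φ : Module.Dual F (Fin n → F)) :
    φ ∈ (rankSupport F E n A).dualAnnihilator ↔
      ∀ a ∈ A, ∑ j, φ (Pi.single j 1) • a j = 0 := by
  have h1 : φ ∈ (rankSupport F E n A).dualAnnihilator ↔ rankSupport F E n A ≤ LinearMap.ker φ := by
    rw [Submodule.mem_dualAnnihilator]; rfl
  rw [h1, aux_support_le]
  apply forall₂_congr
  intro a ha
  have h2 : ∀ l : E →ₗ[F] F, φ (fun j => l (a j)) = l (∑ j, φ (Pi.single j 1) • a j) := by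
    intro l
    rw [LinearMap.pi_apply_eq_sum_univ φ (fun j => l (a j))]
    rw [map_sum]
    apply Finset.sum_congr rfl
    intro j _
    rw [map_smul, smul_eq_mul, smul_eq_mul, mul_comm]
    congr 2
    funext k
    simp [Pi.single_apply, eq_comm]
  simp only [LinearMap.mem_ker, h2]
  rw [← Module.forall_dual_apply_eq_zero_iff F]

variable {V : Type*} [AddCommGroup V] [Module E V] [Module F V] [IsScalarTower F E V]
  [FiniteDimensional E V]

/-- Generator map of a system of columns. -/
noncomputable def auxG (g : Fin n → V) : Module.Dual E V →ₗ[E] (Fin n → E) :=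
  LinearMap.pi (fun j => Module.Dual.eval E V (g j))

/-- Column combination map. -/
noncomputable def auxT (g : Fin n → V) (φ : Module.Dual F (Fin n → F)) : V :=
  ∑ j, φ (Pi.single j 1) • g j

theorem aux_ann_map (g : Fin n → V) (L : Submodule E V) (φ : Module.Dual F (Fin n → F)) :
    φ ∈ (rankSupport F E n (L.dualAnnihilator.map (auxG g) : Set (Fin n → E))).dualAnnihilator ↔
      auxT g φ ∈ L := by
  rw [aux_ann]
  have h1 : ∀ f : Module.Dual E V, ∑ j, φ (Pi.single j 1) • auxG g f j = f (auxT g φ) := by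
    intro f
    simp only [auxT, map_sum]
    apply Finset.sum_congr rfl
    intro j _
    rw [← algebraMap_smul E (φ (Pi.single j 1)) (g j), map_smul, algebraMap_smul]
    rfl
  have h2 : auxT g φ ∈ L ↔ ∀ f ∈ L.dualAnnihilator, f (auxT g φ) = 0 := by
    conv_lhs => rw [← Subspace.dualAnnihilator_dualCoannihilator_eq (W := L)]
    rw [Submodule.mem_dualCoannihilator]
  rw [h2]
  constructor
  · intro h f hf
    rw [← h1]
    exact h _ ⟨f, hf, rfl⟩
  · rintro h _ ⟨f, hf, rfl⟩
    rw [h1]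
    exact h f hf

theorem aux_T_range (g : Fin n → V) (v : V) :
    v ∈ span F (Set.range g) ↔ ∃ φ : Module.Dual F (Fin n → F), auxT g φ = v := by
  rw [Submodule.mem_span_range_iff_exists_fun]
  constructor
  · rintro ⟨c, rfl⟩
    refine ⟨(Pi.basisFun F (Fin n)).constr F c, ?_⟩
    unfold auxT
    apply Finset.sum_congr rfl
    intro j _
    congr 1
    have := (Pi.basisFun F (Fin n)).constr_basis F c j
    rwa [Pi.basisFun_apply] at this
  · rintro ⟨φ, rfl⟩
    exact ⟨fun j => φ (Pi.single j 1), rfl⟩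

theorem aux_finrank_restrict (L : Submodule E V) :
    Module.finrank F (L.restrictScalars F) = Module.finrank F E * Module.finrank E L := by
  rw [Module.finrank_mul_finrank F E L]
  rfl

/-- a subspace of large dimension meets each line -/
theorem aux_meet {r : ℕ} (hV : Module.finrank E V = r + 1) (U : Submodule F V)
    (hU : Module.finrank F E * r + 1 ≤ Module.finrank F U) (L : Submodule E V)
    (hL : Module.finrank E L = 1) : ∃ v ∈ U, v ∈ L ∧ v ≠ 0 := by
  have : FiniteDimensional F V := Module.Finite.trans E V
  by_contra hcon
  have hd : U ⊓ L.restrictScalars F = ⊥ := by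
    rw [Submodule.eq_bot_iff]
    rintro v ⟨h1, h2⟩
    by_contra h0
    exact hcon ⟨v, h1, h2, h0⟩
  have h1 := Submodule.finrank_sup_add_finrank_inf_eq U (L.restrictScalars F)
  have h2 := Submodule.finrank_le (U ⊔ L.restrictScalars F)
  rw [hd, finrank_bot, aux_finrank_restrict, hL] at h1
  rw [← Module.finrank_mul_finrank F E V, hV] at h2
  rw [mul_add] at h2
  omega

theorem aux_miss [Finite F] {r : ℕ} (U : Submodule F (Fin (r+1) → E))
    (hU : Module.finrank F U ≤ Module.finrank F E * r) :
    ∃ w : Fin (r+1) → E, w ≠ 0 ∧ ∀ v ∈ U, v ∈ span E {w} → v = 0 := by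
  classical
  have : Finite E := Module.finite_of_finite F
  by_contra! hcon
  have h : ∀ x : Fin r → E, ∃ v : U, v ≠ 0 ∧ (v : Fin (r+1) → E) ∈ span E {(Fin.cons 1 x : Fin (r+1) → E)} := by
    intro x
    obtain ⟨v, h1, h2, h3⟩ := hcon (Fin.cons 1 x) (fun h => one_ne_zero (congrFun h 0))
    exact ⟨⟨v, h1⟩, fun h => h3 (congrArg Subtype.val h), h2⟩
  choose f hf0 hf using h
  have hinj : Function.Injective f := by
    intro x y hxy
    obtain ⟨a, ha⟩ := Submodule.mem_span_singleton.1 (hf x)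
    obtain ⟨b, hb⟩ := Submodule.mem_span_singleton.1 (hf y)
    rw [← hxy, ← ha] at hb
    have hab := congrFun hb 0
    simp at hab
    subst hab
    have hb0 : b ≠ 0 := by
      rintro rfl
      rw [zero_smul] at ha
      exact hf0 x (Subtype.ext ha.symm)
    funext i
    have := congrFun hb i.succ
    simp [hb0] at this
    exact this.symm
  have hlt : Nat.card (Fin r → E) < Nat.card U := by
    have := Fintype.ofFinite U
    have := Fintype.ofFinite (Fin r → E)
    rw [Nat.card_eq_fintype_card, Nat.card_eq_fintype_card]
    exact Fintype.card_lt_of_injective_of_notMem f hinj (b := 0) (by rintro ⟨x, hx⟩; exact hf0 x hx)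
  have e1 : Nat.card U = Nat.card F ^ Module.finrank F U := Module.natCard_eq_pow_finrank
  have e2 : Nat.card (Fin r → E) = Nat.card F ^ (Module.finrank F E * r) := by
    rw [Nat.card_fun, Module.natCard_eq_pow_finrank (K := F) (V := E), ← pow_mul]
    simp
  rw [e1, e2] at hlt
  have := Nat.pow_le_pow_right (Nat.card_pos (α := F)) hU
  omega

theorem aux_le_iff (g : Fin n → V) (L L' : Submodule E V) :
    rankSupport F E n (L'.dualAnnihilator.map (auxG g) : Set (Fin n → E)) ≤
      rankSupport F E n (L.dualAnnihilator.map (auxG g) : Set (Fin n → E)) ↔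
    ∀ v ∈ span F (Set.range g), v ∈ L → v ∈ L' := by
  rw [← Subspace.dualAnnihilator_le_dualAnnihilator_iff]
  constructor
  · intro h v hv hL
    obtain ⟨φ, rfl⟩ := (aux_T_range g v).1 hv
    exact (aux_ann_map g L' φ).1 (h ((aux_ann_map g L φ).2 hL))
  · intro h φ hφ
    exact (aux_ann_map g L' φ).2 (h _ ((aux_T_range g _).2 ⟨φ, rfl⟩) ((aux_ann_map g L φ).1 hφ))

theorem aux_exists_line {r : ℕ} (hV : Module.finrank E V = r + 1) (g : Fin n → V)
    (hg : Function.Injective (auxG (E := E) g)) (D : Submodule E (Fin n → E))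
    (hD : D ≤ LinearMap.range (auxG (E := E) g)) (hr : Module.finrank E D = r) :
    ∃ L : Submodule E V, Module.finrank E L = 1 ∧ D = L.dualAnnihilator.map (auxG g) := by
  have h1 : (D.comap (auxG g)).map (auxG g) = D := by
    rw [Submodule.map_comap_eq, inf_eq_right.2 hD]
  refine ⟨(D.comap (auxG g)).dualCoannihilator, ?_, ?_⟩
  · have h2 := Subspace.finrank_add_finrank_dualCoannihilator_eq (D.comap (auxG g))
    have h3 := (Submodule.equivMapOfInjective _ hg (D.comap (auxG g))).finrank_eq.symm
    rw [h1] at h3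
    omega
  · rw [Subspace.dualCoannihilator_dualAnnihilator_eq, h1]

theorem aux_minimal_of_ge {r : ℕ} (hV : Module.finrank E V = r + 1) (g : Fin n → V)
    (hg : Function.Injective (auxG (E := E) g))
    (hU : Module.finrank F E * r + 1 ≤ Module.finrank F (span F (Set.range g))) :
    IsRMinimal F E n (LinearMap.range (auxG (E := E) g)) r := by
  intro D hD hDr B hB hBr hle
  obtain ⟨L, hL, rfl⟩ := aux_exists_line hV g hg D hD hDr
  obtain ⟨L', hL', rfl⟩ := aux_exists_line hV g hg B hB (hBr.trans hDr)
  rw [aux_le_iff] at hle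
  obtain ⟨v, hv, hvL, hv0⟩ := aux_meet hV _ hU L hL
  have key : ∀ M : Submodule E V, Module.finrank E M = 1 → v ∈ M → span E {v} = M := by
    intro M hM hvM
    apply Submodule.eq_of_le_of_finrank_eq
    · rwa [Submodule.span_singleton_le_iff_mem]
    · rw [finrank_span_singleton hv0, hM]
  rw [← key L hL hvL, ← key L' hL' (hle v hv hvL)]

theorem aux_ge_of_minimal [Finite F] {r : ℕ} (g : Fin n → (Fin (r+1) → E))
    (hg : Function.Injective (auxG (E := E) g))
    (hmin : IsRMinimal F E n (LinearMap.range (auxG (E := E) g)) r) :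
    Module.finrank F E * r + 1 ≤ Module.finrank F (span F (Set.range g)) := by
  by_contra hcon
  obtain ⟨w, hw0, hw⟩ := aux_miss (span F (Set.range g)) (by omega)
  have hex : ∃ j, g j ≠ 0 := by
    by_contra! h0
    have h1 : auxG (E := E) g (LinearMap.proj 0) = auxG g 0 := by
      funext j
      simp [auxG, h0]
    have h2 := congrArg (fun f => f (fun _ => 1)) (hg h1)
    simp at h2
  obtain ⟨j, hj⟩ := hex
  have hfr : ∀ v : Fin (r+1) → E, v ≠ 0 →
      Module.finrank E ((span E {v}).dualAnnihilator.map (auxG g)) = r := by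
    intro v hv
    rw [← (Submodule.equivMapOfInjective _ hg _).finrank_eq]
    have := Subspace.finrank_add_finrank_dualAnnihilator_eq (span E {v})
    rw [finrank_span_singleton hv] at this
    simp at this
    omega
  have hle := (aux_le_iff (F := F) g (span E {w}) (span E {g j})).2
    (fun v hv hvw => by rw [hw v hv hvw]; exact zero_mem _)
  have heq := hmin _ (LinearMap.map_le_range) (hfr w hw0) _ (LinearMap.map_le_range)
    ((hfr _ hj).trans (hfr w hw0).symm) hle
  have h3 := (aux_le_iff (F := F) g (span E {g j}) (span E {w})).1 heq.ge (g j)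
    (subset_span ⟨j, rfl⟩) (Submodule.mem_span_singleton_self _)
  exact hj (hw _ (subset_span ⟨j, rfl⟩) h3)

theorem aux_inj_of_ge {r : ℕ} (hV : Module.finrank E V = r + 1) (g : Fin n → V)
    (hU : Module.finrank F E * r + 1 ≤ Module.finrank F (span F (Set.range g))) :
    Function.Injective (auxG (E := E) g) := by
  have : FiniteDimensional F V := Module.Finite.trans E V
  rw [← LinearMap.ker_eq_bot, LinearMap.ker_eq_bot']
  intro f hf
  by_contra hf0
  have h1 : span F (Set.range g) ≤ (LinearMap.ker f).restrictScalars F := by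
    rw [Submodule.span_le]
    rintro _ ⟨j, rfl⟩
    exact congrFun hf j
  have h2 := Submodule.finrank_mono h1
  rw [aux_finrank_restrict] at h2
  have h3 := Module.Dual.finrank_ker_add_one_of_ne_zero hf0
  rw [hV] at h3
  have h4 : Module.finrank E (LinearMap.ker f) = r := by omega
  rw [h4] at h2
  omega

theorem aux_G_eq {r : ℕ} (s : Fin (r+1) → Fin n → E) (f : Module.Dual E (Fin (r+1) → E)) :
    auxG (fun j i => s i j) f = ∑ i, f (Pi.single i 1) • s i := by
  funext j
  rw [Finset.sum_apply]
  show f (fun i => s i j) = _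
  rw [LinearMap.pi_apply_eq_sum_univ f]
  apply Finset.sum_congr rfl
  intro i _
  simp only [Pi.smul_apply, smul_eq_mul]
  rw [mul_comm]
  congr 2
  funext k
  simp [Pi.single_apply, eq_comm]

theorem aux_G_constr {r : ℕ} (s : Fin (r+1) → Fin n → E) (c : Fin (r+1) → E) :
    auxG (fun j i => s i j) ((Pi.basisFun E (Fin (r+1))).constr E c) = ∑ i, c i • s i := by
  rw [aux_G_eq]
  apply Finset.sum_congr rfl
  intro j _
  congr 1
  have := (Pi.basisFun E (Fin (r+1))).constr_basis E c j
  rwa [Pi.basisFun_apply] at this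

theorem aux_G_range {r : ℕ} (s : Fin (r+1) → Fin n → E) :
    LinearMap.range (auxG (fun j i => s i j)) = span E (Set.range s) := by
  ext x
  rw [Submodule.mem_span_range_iff_exists_fun]
  constructor
  · rintro ⟨f, rfl⟩
    exact ⟨_, (aux_G_eq s f).symm⟩
  · rintro ⟨c, rfl⟩
    exact ⟨_, aux_G_constr s c⟩

theorem aux_G_inj {r : ℕ} (s : Fin (r+1) → Fin n → E) :
    Function.Injective (auxG (E := E) (fun j i => s i j)) ↔ LinearIndependent E s := by
  rw [← LinearMap.ker_eq_bot, LinearMap.ker_eq_bot', Fintype.linearIndependent_iff]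
  constructor
  · intro h c hc i
    have h1 := h _ ((aux_G_constr s c).trans hc)
    have := (Pi.basisFun E (Fin (r+1))).constr_basis E c i
    rw [h1] at this
    exact this.symm
  · intro h f hf
    rw [aux_G_eq] at hf
    apply (Pi.basisFun E (Fin (r+1))).ext
    intro i
    rw [Pi.basisFun_apply]
    exact h _ hf i

theorem aux_main_iff [Finite F] {r : ℕ} (s : Fin (r+1) → Fin n → E) :
    (LinearIndependent E s ∧ IsRMinimal F E n (span E (Set.range s)) r) ↔
    Module.finrank F E * r + 1 ≤
      Module.finrank F (span F (Set.range (fun j i => s i j : Fin n → Fin (r+1) → E))) := by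
  rw [← aux_G_inj, ← aux_G_range]
  constructor
  · rintro ⟨h1, h2⟩
    exact aux_ge_of_minimal _ h1 h2
  · intro h
    have hi := aux_inj_of_ge (E := E) (r := r) (by simp) _ h
    exact ⟨hi, aux_minimal_of_ge (by simp) _ hi h⟩

end support

/-- Proposition 5.3: for a finite field `F` with `|F| = q` and `n ≥ r + 1`, the number of
`[n, r+1]` `r`-minimal codes times `δ_{q^m}(r+1, r+1)` equals
`Σ_{i=mr+1}^{m(r+1)} δ_q(m(r+1), i) · bin_q(n, i)`. -/
theorem statement18 (F E : Type*) [Field F] [Field E] [Algebra F E] [Fintype F]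
    [FiniteDimensional F E] (m : ℕ) (hm : Module.finrank F E = m)
    (q : ℕ) (hq : Fintype.card F = q)
    (n r : ℕ) (hn : r + 1 ≤ n) :
    (Nat.card {C : Submodule E (Fin n → E) //
          Module.finrank E C = r + 1 ∧ IsRMinimal F E n C r} : ℝ) *
        qdelta ((q : ℝ) ^ m) (r + 1) (r + 1) =
      ∑ i ∈ Finset.Icc (m * r + 1) (m * (r + 1)),
        qdelta (q : ℝ) (m * (r + 1)) i * qbin (q : ℝ) n i := by
  have : Finite E := Module.finite_of_finite F
  have := Fintype.ofFinite E
  have hE : ((q:ℝ)^m) = (Fintype.card E : ℝ) := by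
    rw [Module.card_eq_pow_finrank (K := F), hq, hm]; push_cast; rfl
  rw [hE, ← aux_tuples (K := E) (r+1) (fun C => IsRMinimal F E n C r)]
  have hfr : Module.finrank F (Fin (r+1) → E) = m * (r+1) := by
    rw [Module.finrank_pi_fintype]; simp [hm, mul_comm]
  have h := aux_count_ge (K := F) (V := Fin (r+1) → E) q hq n (m * r + 1)
  rw [hfr] at h
  rw [← h]
  congr 1
  apply Nat.card_congr
  refine (Equiv.piComm (fun (_ : Fin (r+1)) (_ : Fin n) => E)).subtypeEquiv ?_
  intro s
  rw [aux_main_iff, hm]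
  rfl
end

section
/- Suppose F is a finite field with |F| = q (so E is finite). Let (k,r) ∈ ℕ² with k ≥ r+1, and set n = mr + k(r+1) − r² − 2r. Then there exists a k-dimensional E-subspace C of E^n that is r-minimal; in particular, ϖ_{E/F}(k,r) ≤ mr + k(r+1) − r² − 2r. -/
open Submodule Pointwise

lemma aux_intermediate {K V : Type*} [Field K] [AddCommGroup V] [Module K V]
    [FiniteDimensional K V] (W T : Submodule K V) (hWT : W ≤ T) (d : ℕ)
    (h1 : Module.finrank K W ≤ d) (h2 : d ≤ Module.finrank K T) :
    ∃ H : Submodule K V, W ≤ H ∧ H ≤ T ∧ Module.finrank K H = d := by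
  induction d, h1 using Nat.le_induction with
  | base => exact ⟨W, le_rfl, hWT, rfl⟩
  | succ d hd ih =>
    obtain ⟨H, hWH, hHT, hH⟩ := ih (by omega)
    have hne : ¬ T ≤ H := by
      intro h
      have := Submodule.finrank_mono h
      omega
    obtain ⟨v, hvT, hvH⟩ := SetLike.not_le_iff_exists.mp hne
    refine ⟨H ⊔ Submodule.span K {v}, hWH.trans le_sup_left, ?_, ?_⟩
    · refine sup_le hHT ?_
      rw [Submodule.span_singleton_le_iff_mem]; exact hvT
    · have a1 := Submodule.finrank_add_le_finrank_add_finrank H (Submodule.span K {v})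
      have a2 := finrank_span_singleton (K := K) (v := v) (fun h => hvH (h ▸ H.zero_mem))
      have a3 : H < H ⊔ Submodule.span K {v} := by
        refine lt_of_le_of_ne le_sup_left fun h => hvH ?_
        rw [h]
        exact Submodule.mem_sup_right (Submodule.mem_span_singleton_self v)
      have a4 := Submodule.finrank_lt_finrank_of_lt a3
      omega

/-- Counting subspaces. -/
lemma aux_card_subspaces {K V : Type*} [Field K] [Fintype K] [AddCommGroup V] [Module K V]
    [Finite V] (d : ℕ) :
    Nat.card {W : Submodule K V // Module.finrank K W = d} *
      (∏ i : Fin d, ((Nat.card K) ^ d - (Nat.card K) ^ i.val)) ≤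
      (Nat.card K) ^ (Module.finrank K V * d) := by
  classical
  have : Finite (Submodule K V) := Finite.of_injective (fun W => (W : Set V)) SetLike.coe_injective
  let S := {W : Submodule K V // Module.finrank K W = d}
  let T := Σ W : S, {v : Fin d → W.1 // LinearIndependent K v}
  have : Fintype S := Fintype.ofFinite S
  have hT : Nat.card T = Nat.card S * ∏ i : Fin d, ((Nat.card K) ^ d - (Nat.card K) ^ i.val) := by
    rw [Nat.card_sigma]
    rw [Finset.sum_congr rfl (g := fun _ => ∏ i : Fin d, ((Nat.card K) ^ d - (Nat.card K) ^ i.val))]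
    · simp [Nat.card_eq_fintype_card]
    · intro W _
      have := card_linearIndependent (K := K) (V := W.1) (k := d) W.2.ge
      rw [this, W.2, Nat.card_eq_fintype_card]
  rw [← hT]
  have hV : Nat.card (Fin d → V) = (Nat.card K) ^ (Module.finrank K V * d) := by
    rw [Nat.card_fun, Module.natCard_eq_pow_finrank (K := K) (V := V), pow_mul]; simp
  rw [← hV]
  refine Nat.card_le_card_of_injective (fun t : T => fun i => ((t.2.1 i : t.1.1) : V)) ?_
  have key : ∀ t : T, Submodule.span K (Set.range fun i => ((t.2.1 i : t.1.1) : V)) = t.1.1 := by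
    intro t
    refine Submodule.eq_of_le_of_finrank_eq ?_ ?_
    · rw [Submodule.span_le]; rintro _ ⟨i, rfl⟩; exact (t.2.1 i).2
    · change Module.finrank K (Submodule.span K (Set.range (t.1.1.subtype ∘ t.2.1))) = _
      rw [finrank_span_eq_card (t.2.2.map' t.1.1.subtype (Submodule.ker_subtype _)), t.1.2]
      simp
  rintro ⟨⟨W, hW⟩, v, hv⟩ ⟨⟨W', hW'⟩, v', hv'⟩ h
  have e1 := key ⟨⟨W, hW⟩, v, hv⟩
  have e2 := key ⟨⟨W', hW'⟩, v', hv'⟩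
  simp only at e1 e2 h
  have : W = W' := by rw [← e1, ← e2, h]
  subst this
  have : v = v' := by
    funext i; exact Subtype.ext (congrFun h i)
  subst this
  rfl

lemma aux_prod_bound (x : ℝ) (h0 : 0 ≤ x) (h1 : x ≤ 1) (d : ℕ) :
    1 - x - x ^ 2 ≤ ∏ i ∈ Finset.range d, (1 - x ^ (i + 1)) := by
  have : ∀ d : ℕ, 1 - x - x ^ 2 + x ^ (d + 2) ≤ ∏ i ∈ Finset.range (d + 1), (1 - x ^ (i + 1)) := by
    intro d
    induction d with
    | zero => simp
    | succ d ih =>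
      rw [Finset.prod_range_succ]
      have h2 : 0 ≤ 1 - x ^ (d + 1 + 1) := by
        have := pow_le_one₀ h0 h1 (n := d + 1 + 1)
        linarith
      refine le_trans ?_ (mul_le_mul_of_nonneg_right ih h2)
      have h3 : x ^ (2 * d + 4) ≤ x ^ (d + 4) := pow_le_pow_of_le_one h0 h1 (by omega)
      have : (1 - x - x ^ 2 + x ^ (d + 2)) * (1 - x ^ (d + 1 + 1)) =
        1 - x - x ^ 2 + x ^ (d + 1 + 2) + (x ^ (d + 4) - x ^ (2 * d + 4)) := by ring
      rw [this]; linarith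
  cases d with
  | zero => simp; nlinarith
  | succ d =>
    refine le_trans ?_ (this d)
    have := pow_nonneg h0 (d + 2)
    linarith

lemma aux_gl_bound (q : ℕ) (hq : 1 ≤ q) (d : ℕ) :
    (1 - (q : ℝ)⁻¹ - (q : ℝ)⁻¹ ^ 2) * (q : ℝ) ^ (d * d) ≤
      ((∏ i : Fin d, (q ^ d - q ^ i.val) : ℕ) : ℝ) := by
  have hq0 : (0 : ℝ) < q := by exact_mod_cast hq
  have e : ((∏ i : Fin d, (q ^ d - q ^ i.val) : ℕ) : ℝ) =
      (∏ i ∈ Finset.range d, (1 - (q : ℝ)⁻¹ ^ (i + 1))) * (q : ℝ) ^ (d * d) := by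
    rw [Fin.prod_univ_eq_prod_range (fun i => q ^ d - q ^ i) d, Nat.cast_prod,
      ← Finset.prod_range_reflect (fun i => (1 - (q : ℝ)⁻¹ ^ (i + 1)))]
    have : (q : ℝ) ^ (d * d) = ∏ i ∈ Finset.range d, (q : ℝ) ^ d := by
      simp [pow_mul]
    rw [this, ← Finset.prod_mul_distrib]
    refine Finset.prod_congr rfl fun i hi => ?_
    have hi : i < d := Finset.mem_range.mp hi
    rw [Nat.cast_sub (Nat.pow_le_pow_right hq hi.le)]
    push_cast
    have h : (q : ℝ) ^ d = (q : ℝ) ^ (d - 1 - i + 1) * (q : ℝ) ^ i := by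
      rw [← pow_add]; congr 1; omega
    rw [sub_mul, one_mul]
    congr 1
    rw [h, ← mul_assoc, ← mul_pow, inv_mul_cancel₀ hq0.ne', one_pow, one_mul]
  rw [e]
  refine mul_le_mul_of_nonneg_right (aux_prod_bound _ (by positivity) ?_ d) (by positivity)
  exact inv_le_one_of_one_le₀ (by exact_mod_cast hq)

lemma aux_card_real {K V : Type*} [Field K] [Fintype K] [AddCommGroup V] [Module K V]
    [Finite V] (d e : ℕ) (hd : Module.finrank K V = d + e) (c : ℝ)
    (hc : c ≤ 1 - (Nat.card K : ℝ)⁻¹ - (Nat.card K : ℝ)⁻¹ ^ 2) :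
    (Nat.card {W : Submodule K V // Module.finrank K W = d} : ℝ) * c ≤
      (Nat.card K : ℝ) ^ (e * d) := by
  have h := aux_card_subspaces (K := K) (V := V) d
  have hq : 1 ≤ Nat.card K := Nat.card_pos
  have g := aux_gl_bound (Nat.card K) hq d
  generalize Nat.card K = q at *
  have hq0 : (0 : ℝ) < q := by exact_mod_cast hq
  generalize Nat.card {W : Submodule K V // Module.finrank K W = d} = N at *
  have h' : (N : ℝ) * ((∏ i : Fin d, (q ^ d - q ^ i.val) : ℕ) : ℝ) ≤
      (q : ℝ) ^ (Module.finrank K V * d) := by exact_mod_cast h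
  rw [hd, add_mul, pow_add] at h'
  have hpos : (0 : ℝ) < (q : ℝ) ^ (d * d) := by positivity
  have h2 : (N : ℝ) * (c * (q : ℝ) ^ (d * d)) ≤ (q : ℝ) ^ (d * d) * (q : ℝ) ^ (e * d) := by
    refine le_trans ?_ h'
    refine mul_le_mul_of_nonneg_left ?_ (Nat.cast_nonneg N)
    exact le_trans (mul_le_mul_of_nonneg_right hc hpos.le) g
  have h3 : (q : ℝ) ^ (d * d) * ((N : ℝ) * c) ≤ (q : ℝ) ^ (d * d) * (q : ℝ) ^ (e * d) := by
    linarith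
  exact le_of_mul_le_mul_left h3 hpos

/-- The key genericity property. -/
def AuxGood (F E : Type*) [Field F] [Field E] [Algebra F E] (n k r s : ℕ)
    (G : (Fin n → F) →ₗ[F] (Fin k → E)) : Prop :=
  ∀ H : Submodule E (Fin k → E), Module.finrank E H = k - r - 1 →
    Module.finrank F ((H.restrictScalars F).comap G) < s

section
set_option linter.unusedSectionVars false
variable {F E : Type*} [Field F] [Field E] [Algebra F E] [FiniteDimensional F E]

lemma aux_finrank_restrict_s19 {k : ℕ} (H : Submodule E (Fin k → E)) :
    Module.finrank F (H.restrictScalars F) = Module.finrank F E * Module.finrank E H :=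
  (Module.finrank_mul_finrank F E H).symm

lemma aux_finrank_quot {k : ℕ} (H : Submodule E (Fin k → E)) :
    Module.finrank F ((Fin k → E) ⧸ H.restrictScalars F) + Module.finrank F E * Module.finrank E H
      = Module.finrank F E * k := by
  rw [← aux_finrank_restrict_s19 H, Submodule.finrank_quotient_add_finrank,
    ← Module.finrank_mul_finrank F E (Fin k → E)]
  simp

lemma aux_comap_eq {n k : ℕ} (G : (Fin n → F) →ₗ[F] (Fin k → E)) (H : Submodule E (Fin k → E)) :
    (H.restrictScalars F).comap G = LinearMap.ker ((H.restrictScalars F).mkQ ∘ₗ G) := by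
  rw [LinearMap.ker_comp, Submodule.ker_mkQ]

lemma aux_comap_ge {n k : ℕ} (G : (Fin n → F) →ₗ[F] (Fin k → E)) (V : Submodule E (Fin k → E)) :
    n + Module.finrank F E * Module.finrank E V ≤
      Module.finrank F ((V.restrictScalars F).comap G) + Module.finrank F E * k := by
  have h1 := LinearMap.finrank_range_add_finrank_ker ((V.restrictScalars F).mkQ ∘ₗ G)
  have h2 := Submodule.finrank_le (LinearMap.range ((V.restrictScalars F).mkQ ∘ₗ G))
  have h3 := aux_finrank_quot (F := F) V
  rw [← aux_comap_eq] at h1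
  simp at h1
  omega

lemma aux_cutting {n k r s : ℕ} (hkr : r + 1 ≤ k) (hn : n = Module.finrank F E * r + s)
    (G : (Fin n → F) →ₗ[F] (Fin k → E)) (hG : AuxGood F E n k r s G) :
    IsCuttingBlocking E ((LinearMap.range G : Submodule F (Fin k → E)) : Set (Fin k → E)) r := by
  intro V hV
  simp only [Module.finrank_fin_fun] at hV
  set W := Submodule.span E (((LinearMap.range G : Submodule F (Fin k → E)) : Set (Fin k → E)) ∩ V)
    with hW
  have hWV : W ≤ V := by
    rw [hW, Submodule.span_le]; exact Set.inter_subset_right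
  by_contra hne
  have hlt := Submodule.finrank_lt_finrank_of_lt (lt_of_le_of_ne hWV hne)
  obtain ⟨H, h1, h2, h3⟩ := aux_intermediate W V hWV (k - r - 1) (by omega) (by omega)
  have g := hG H h3
  have hle : (V.restrictScalars F).comap G ≤ (H.restrictScalars F).comap G := by
    intro x hx
    exact h1 (Submodule.subset_span ⟨⟨x, rfl⟩, hx⟩)
  have g2 := Submodule.finrank_mono hle
  have g3 := aux_comap_ge G V
  rw [hV] at g3
  have : Module.finrank F E * k =
    Module.finrank F E * r + Module.finrank F E * (k - r) := by
    rw [← mul_add]; congr 1; omega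
  omega

lemma aux_exists_maxrank {n k r s : ℕ} (hkr : r + 1 ≤ k) (hn : n = Module.finrank F E * r + s)
    (hs : Module.finrank F E * (k - r - 1) < s) :
    ∃ G : (Fin n → F) →ₗ[F] (Fin k → E), AuxGood F E n k r s G := by
  have hdim : Module.finrank F (Fin k → E) = Module.finrank F E * k := by
    rw [← Module.finrank_mul_finrank F E (Fin k → E)]; simp
  have hm : 0 < Module.finrank F E := Module.finrank_pos
  rcases le_total n (Module.finrank F E * k) with h | h
  · have : Module.finrank F (Fin n → F) ≤ Module.finrank F (Fin k → E) := by
      rw [hdim]; simpa using h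
    rw [finrank_le_iff_exists_linearMap] at this
    obtain ⟨G, hG⟩ := this
    refine ⟨G, fun H hH => ?_⟩
    have e := aux_finrank_restrict_s19 (F := F) H
    rw [hH] at e
    have := LinearMap.finrank_le_finrank_of_injective
      (f := (G.restrict (p := (H.restrictScalars F).comap G) (q := H.restrictScalars F)
        (fun x hx => hx))) (by
          intro x y hxy
          exact Subtype.ext (hG (congrArg Subtype.val hxy)))
    omega
  · have : Module.finrank F (Fin k → E) ≤ Module.finrank F (Fin n → F) := by
      rw [hdim]; simpa using h
    rw [finrank_le_iff_exists_linearMap] at this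
    obtain ⟨f, hf⟩ := this
    obtain ⟨G, hG⟩ := f.exists_leftInverse_of_injective (LinearMap.ker_eq_bot.mpr hf)
    have hsurj : Function.Surjective G := fun y => ⟨f y, LinearMap.congr_fun hG y⟩
    refine ⟨G, fun H hH => ?_⟩
    have h1 := LinearMap.finrank_range_add_finrank_ker ((H.restrictScalars F).mkQ ∘ₗ G)
    rw [LinearMap.range_eq_top.mpr, finrank_top, ← aux_comap_eq] at h1
    · have h3 := aux_finrank_quot (F := F) H
      rw [hH] at h3
      simp at h1
      have : Module.finrank F E * k =
        Module.finrank F E * r + Module.finrank F E * (k - r - 1) + Module.finrank F E := by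
        rw [← mul_add, ← mul_add_one]; congr 1; omega
      omega
    · simpa using (Submodule.mkQ_surjective _).comp hsurj

lemma aux_exists_zero {k : ℕ} (hk : 1 ≤ k) :
    ∃ G : (Fin k → F) →ₗ[F] (Fin k → E), AuxGood F E k k 0 k G := by
  refine ⟨fIncl F E k, fun H hH => ?_⟩
  by_contra hc
  have htop : (H.restrictScalars F).comap (fIncl F E k) = ⊤ := by
    apply Submodule.eq_top_of_finrank_eq
    have := Submodule.finrank_le ((H.restrictScalars F).comap (fIncl F E k))
    simp at this ⊢
    omega
  have : H = ⊤ := by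
    rw [eq_top_iff]
    intro y _
    rw [pi_eq_sum_univ y]
    refine Submodule.sum_mem _ fun i _ => H.smul_mem _ ?_
    have : (fun j => if i = j then (1 : F) else 0) ∈
      (H.restrictScalars F).comap (fIncl F E k) := by rw [htop]; trivial
    have h2 : fIncl F E k (fun j => if i = j then (1 : F) else 0) ∈ H := this
    convert h2 using 1
    funext j
    simp [fIncl, apply_ite]
  rw [this, finrank_top] at hH
  simp at hH
  omega

lemma aux_exists_count [Fintype F] {n k r s : ℕ} (hkr : r + 1 ≤ k)
    (hn : n = Module.finrank F E * r + s) (hs : s = (r + 1) * (k - r - 1) + 1)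
    (hm : 3 ≤ Module.finrank F E) :
    ∃ G : (Fin n → F) →ₗ[F] (Fin k → E), AuxGood F E n k r s G := by
  classical
  by_contra hcon
  push Not at hcon
  have : Finite E := Module.finite_of_finite F
  have : Fintype E := Fintype.ofFinite E
  have : Finite (Submodule E (Fin k → E)) :=
    Finite.of_injective (fun W => (W : Set (Fin k → E))) SetLike.coe_injective
  have : Finite (Submodule F (Fin n → F)) :=
    Finite.of_injective (fun W => (W : Set (Fin n → F))) SetLike.coe_injective
  let SH := {H : Submodule E (Fin k → E) // Module.finrank E H = k - r - 1}
  let SK := {K : Submodule F (Fin n → F) // Module.finrank F K = s}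
  let Ω := (Fin n → F) →ₗ[F] (Fin k → E)
  have : Finite Ω := Module.finite_of_finite F
  let T : ∀ p : SH × SK, Ω →ₗ[F] (p.2.1 →ₗ[F] ((Fin k → E) ⧸ p.1.1.restrictScalars F)) := fun p =>
    { toFun := fun G => (p.1.1.restrictScalars F).mkQ ∘ₗ G ∘ₗ p.2.1.subtype
      map_add' := by intros; rw [LinearMap.add_comp, LinearMap.comp_add]
      map_smul' := by intros; rw [LinearMap.smul_comp, LinearMap.comp_smul]; rfl }
  have hTs : ∀ p, Function.Surjective (T p) := by
    intro p f
    obtain ⟨g, hg⟩ := (p.1.1.restrictScalars F).mkQ.exists_rightInverse_of_surjective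
      (LinearMap.range_eq_top.mpr (Submodule.mkQ_surjective _))
    obtain ⟨G, hG⟩ := (g ∘ₗ f).exists_extend
    refine ⟨G, ?_⟩
    change (p.1.1.restrictScalars F).mkQ ∘ₗ (G ∘ₗ p.2.1.subtype) = f
    rw [hG, ← LinearMap.comp_assoc, hg, LinearMap.id_comp]
  set q := Nat.card F with hq
  set m := Module.finrank F E with hmdef
  have hcard : ∀ p, Nat.card Ω = q ^ (s * (m * (r + 1))) * Nat.card (LinearMap.ker (T p)) := by
    intro p
    have h1 := LinearMap.finrank_range_add_finrank_ker (T p)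
    rw [LinearMap.range_eq_top.mpr (hTs p), finrank_top, Module.finrank_linearMap, p.2.2] at h1
    have h3 := aux_finrank_quot (F := F) p.1.1
    rw [p.1.2, ← hmdef] at h3
    have h4 : m * k = m * (r + 1) + m * (k - r - 1) := by
      rw [← mul_add]; congr 1; omega
    have h5 : Module.finrank F ((Fin k → E) ⧸ p.1.1.restrictScalars F) = m * (r + 1) := by omega
    rw [h5] at h1
    rw [Module.natCard_eq_pow_finrank (K := F) (V := Ω),
      Module.natCard_eq_pow_finrank (K := F) (V := LinearMap.ker (T p)), ← pow_add, h1]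
  -- every `G` lies in some kernel
  have hbad : ∀ G : Ω, ∃ p : SH × SK, G ∈ LinearMap.ker (T p) := by
    intro G
    have := hcon G
    unfold AuxGood at this
    push Not at this
    obtain ⟨H, hH, hd⟩ := this
    obtain ⟨K, -, hK, hKd⟩ := aux_intermediate (⊥ : Submodule F (Fin n → F)) _ bot_le s
      (by simp) hd
    refine ⟨(⟨H, hH⟩, ⟨K, hKd⟩), ?_⟩
    rw [LinearMap.mem_ker]
    ext1 x
    change (H.restrictScalars F).mkQ (G x) = 0
    rw [Submodule.mkQ_apply, Submodule.Quotient.mk_eq_zero]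
    exact hK x.2
  choose p hp using hbad
  have : Fintype (SH × SK) := Fintype.ofFinite _
  have hle : Nat.card Ω ≤ Nat.card (Σ p : SH × SK, LinearMap.ker (T p)) := by
    refine Nat.card_le_card_of_injective (fun G : Ω => ⟨p G, ⟨G, hp G⟩⟩) ?_
    intro G G' h
    have := congrArg (fun t : (Σ p : SH × SK, LinearMap.ker (T p)) => (t.2 : Ω)) h
    exact this
  have hqpos : 0 < q := Nat.card_pos
  have hΩ : 0 < Nat.card Ω := Nat.card_pos
  have hmain : q ^ (s * (m * (r + 1))) ≤ Nat.card SH * Nat.card SK := by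
    have h1 : q ^ (s * (m * (r + 1))) * Nat.card Ω ≤ Nat.card SH * Nat.card SK * Nat.card Ω := by
      calc q ^ (s * (m * (r + 1))) * Nat.card Ω
          ≤ q ^ (s * (m * (r + 1))) * Nat.card (Σ p : SH × SK, LinearMap.ker (T p)) :=
            Nat.mul_le_mul_left _ hle
        _ = ∑ p : SH × SK, q ^ (s * (m * (r + 1))) * Nat.card (LinearMap.ker (T p)) := by
            rw [Nat.card_sigma, Finset.mul_sum]
        _ = ∑ _p : SH × SK, Nat.card Ω := Finset.sum_congr rfl fun p _ => (hcard p).symm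
        _ = Nat.card SH * Nat.card SK * Nat.card Ω := by
            rw [Finset.sum_const, Finset.card_univ, ← Nat.card_eq_fintype_card, Nat.card_prod,
              smul_eq_mul]
    exact Nat.le_of_mul_le_mul_right h1 hΩ
  have hq2 : 2 ≤ q := by
    rw [hq]; exact Finite.one_lt_card
  have hQ : Nat.card E = q ^ m := Module.natCard_eq_pow_finrank
  have hQ8 : 8 ≤ Nat.card E := by
    rw [hQ]
    calc 8 = 2 ^ 3 := by norm_num
      _ ≤ q ^ 3 := Nat.pow_le_pow_left hq2 3
      _ ≤ q ^ m := Nat.pow_le_pow_right hqpos hm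
  have cH := aux_card_real (K := E) (V := Fin k → E) (k - r - 1) (r + 1) (by simp; omega) (55 / 64)
    (by
      have h8 : (8 : ℝ) ≤ (Nat.card E : ℝ) := by exact_mod_cast hQ8
      have : (Nat.card E : ℝ)⁻¹ ≤ 8⁻¹ := inv_anti₀ (by norm_num) h8
      have h0 : 0 ≤ (Nat.card E : ℝ)⁻¹ := by positivity
      nlinarith)
  have cK := aux_card_real (K := F) (V := Fin n → F) s (m * r) (by simp; omega) (1 / 4)
    (by
      have h8 : (2 : ℝ) ≤ (Nat.card F : ℝ) := by exact_mod_cast hq2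
      have : (Nat.card F : ℝ)⁻¹ ≤ 2⁻¹ := inv_anti₀ (by norm_num) h8
      have h0 : 0 ≤ (Nat.card F : ℝ)⁻¹ := by positivity
      nlinarith)
  have hmainR : ((q : ℝ) ^ m) ^ (s * (r + 1)) ≤ (Nat.card SH : ℝ) * Nat.card SK := by
    rw [← pow_mul]
    have : m * (s * (r + 1)) = s * (m * (r + 1)) := by ring
    rw [this]
    exact_mod_cast hmain
  change (Nat.card SH : ℝ) * (55 / 64) ≤ _ at cH
  change (Nat.card SK : ℝ) * (1 / 4) ≤ _ at cK
  have hQR : (Nat.card E : ℝ) = (q : ℝ) ^ m := by rw [hQ]; push_cast; rfl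
  have e2 : (Nat.card F : ℝ) ^ (m * r * s) = (Nat.card E : ℝ) ^ (r * s) := by
    rw [hQR, ← pow_mul, mul_assoc]
  rw [e2] at cK
  rw [← hQR] at hmainR
  have h8 : (8 : ℝ) ≤ (Nat.card E : ℝ) := by exact_mod_cast hQ8
  generalize (Nat.card E : ℝ) = Q at *
  have hmul := mul_le_mul cH cK (by positivity) (by positivity)
  rw [← pow_add] at hmul
  have e3 : s * (r + 1) = ((r + 1) * (k - r - 1) + r * s) + 1 := by
    have : s * (r + 1) = s + r * s := by ring
    omega
  rw [e3, pow_succ] at hmainR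
  have hpos : 0 < Q ^ ((r + 1) * (k - r - 1) + r * s) := by positivity
  have : Q ^ ((r + 1) * (k - r - 1) + r * s) * 8 ≤ Q ^ ((r + 1) * (k - r - 1) + r * s) * Q :=
    mul_le_mul_of_nonneg_left h8 hpos.le
  nlinarith

lemma aux_exists_good [Fintype F] {n k r s : ℕ} (hkr : r + 1 ≤ k)
    (hn : n = Module.finrank F E * r + s) (hs : s = (r + 1) * (k - r - 1) + 1) :
    ∃ G : (Fin n → F) →ₗ[F] (Fin k → E), AuxGood F E n k r s G := by
  rcases Nat.eq_zero_or_pos r with rfl | hr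
  · have hsk : s = k := by simp at hs; omega
    have hnk : n = k := by simp at hn; omega
    subst hsk; subst hnk
    exact aux_exists_zero hkr
  by_cases hm : Module.finrank F E ≤ r + 1
  · apply aux_exists_maxrank hkr hn
    have := Nat.mul_le_mul_right (k - r - 1) hm
    omega
  · exact aux_exists_count hkr hn hs (by omega)

end

section
set_option linter.unusedSectionVars false
variable {F E : Type*} [Field F] [Field E] [Algebra F E] [FiniteDimensional F E]

lemma aux_expand {n : ℕ} {ι : Type*} [Fintype ι] (ε : Module.Basis ι F E) (b : Fin n → E) :
    b = ∑ i, ε i • fIncl F E n (fun j => ε.coord i (b j)) := by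
  funext j
  rw [Finset.sum_apply]
  conv_lhs => rw [← ε.sum_repr (b j)]
  refine Finset.sum_congr rfl fun i _ => ?_
  simp [fIncl, Algebra.smul_def, mul_comm]

lemma aux_span_coord {n : ℕ} (b : Fin n → E) (U : Submodule F (Fin n → F))
    (hb : b ∈ Submodule.span E (fIncl F E n '' (U : Set (Fin n → F)))) :
    ∀ c : E →ₗ[F] F, (fun j => c (b j)) ∈ U := by
  induction hb using Submodule.span_induction with
  | mem x hx =>
    intro c
    obtain ⟨u, hu, rfl⟩ := hx
    have : (fun j => c (fIncl F E n u j)) = c 1 • u := by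
      funext j
      have : fIncl F E n u j = u j • (1 : E) := by simp [fIncl, Algebra.smul_def]
      rw [this, map_smul]
      simp [mul_comm]
    rw [this]
    exact U.smul_mem _ hu
  | zero =>
    intro c
    have : (fun j : Fin n => c ((0 : Fin n → E) j)) = 0 := by funext j; simp
    rw [this]; exact U.zero_mem
  | add x y _ _ hx hy =>
    intro c
    have : (fun j : Fin n => c ((x + y) j)) = (fun j => c (x j)) + fun j => c (y j) := by
      funext j; simp
    rw [this]; exact U.add_mem (hx c) (hy c)
  | smul a x _ ih =>
    intro c
    exact ih (c ∘ₗ LinearMap.mulLeft F a)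

lemma aux_support {n : ℕ} (B D : Submodule E (Fin n → E))
    (h : rankSupport F E n (B : Set (Fin n → E)) ≤ rankSupport F E n (D : Set (Fin n → E)))
    (x : Fin n → F) (hx : ∀ d ∈ D, ∑ j, x j • d j = 0) : ∀ b ∈ B, ∑ j, x j • b j = 0 := by
  have ε := Module.finBasis F E
  let U : Submodule F (Fin n → F) := LinearMap.ker (∑ j, x j • (LinearMap.proj j : (Fin n → F) →ₗ[F] F))
  have hU : ∀ u, u ∈ U ↔ ∑ j, x j * u j = 0 := by
    intro u; simp [U, LinearMap.mem_ker, LinearMap.sum_apply]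
  have hD : rankSupport F E n (D : Set (Fin n → E)) ≤ U := by
    refine sInf_le ?_
    intro d hd
    rw [SetLike.mem_coe, aux_expand ε d]
    refine Submodule.sum_mem _ fun i _ => Submodule.smul_mem _ _
      (Submodule.subset_span ⟨_, ?_, rfl⟩)
    rw [SetLike.mem_coe, hU]
    have := congrArg (ε.coord i) (hx d hd)
    rw [map_sum, map_zero] at this
    simpa only [map_smul, smul_eq_mul] using this
  intro b hb
  have hbU : ∀ c : E →ₗ[F] F, (fun j => c (b j)) ∈ U := by
    intro c
    apply hD
    apply h
    rw [rankSupport, Submodule.mem_sInf]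
    intro W hW
    exact aux_span_coord b W (hW hb) c
  apply ε.ext_elem
  intro i
  have := (hU _).1 (hbU (ε.coord i))
  change ε.coord i (∑ j, x j • b j) = ε.coord i 0
  rw [map_sum, map_zero]
  simpa only [map_smul, smul_eq_mul] using this

lemma aux_code {n k r : ℕ} (hkr : r + 1 ≤ k) (G : (Fin n → F) →ₗ[F] (Fin k → E))
    (hG : IsCuttingBlocking E
      ((LinearMap.range G : Submodule F (Fin k → E)) : Set (Fin k → E)) r) :
    ∃ C : Submodule E (Fin n → E), Module.finrank E C = k ∧ IsRMinimal F E n C r := by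
  classical
  let β : LinearMap.BilinForm E (Fin k → E) := Matrix.toBilin' 1
  have hβ : ∀ y v, β y v = y ⬝ᵥ v := by
    intro y v; simp [β, Matrix.toBilin'_apply']
  have hnd : β.Nondegenerate := by
    apply LinearMap.BilinForm.nondegenerate_toBilin'_of_det_ne_zero'
    simp
  have hrefl : β.IsRefl := by
    intro y v h
    rw [hβ] at h ⊢
    rw [dotProduct_comm]; exact h
  let φ : (Fin k → E) →ₗ[E] (Fin n → E) :=
    LinearMap.pi fun j => LinearMap.flip β (G (Pi.single j 1))
  have hφ : ∀ y (x : Fin n → F), ∑ j, x j • φ y j = β y (G x) := by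
    intro y x
    have hx : x = ∑ j, x j • (Pi.single j (1 : F) : Fin n → F) := by
      funext i
      simp [Finset.sum_apply, Pi.single_apply]
    conv_rhs => rw [hx, map_sum, map_sum]
    refine Finset.sum_congr rfl fun j _ => ?_
    rw [map_smul, ← algebraMap_smul E (x j) (G _), map_smul, algebraMap_smul]
    rfl
  -- the columns span
  have hspan : ∀ v : Fin k → E,
      v ∈ Submodule.span E ((LinearMap.range G : Submodule F (Fin k → E)) : Set (Fin k → E)) := by
    intro v
    obtain ⟨V, h1, -, h3⟩ := aux_intermediate (Submodule.span E {v}) ⊤ le_top (k - r)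
      ((finrank_span_le_card ({v} : Set (Fin k → E))).trans (by simp; omega))
      (by rw [finrank_top]; simp)
    have hv : v ∈ V := h1 (Submodule.mem_span_singleton_self v)
    have := hG V (by rw [h3]; simp)
    rw [← this] at hv
    exact Submodule.span_mono Set.inter_subset_left hv
  have hinj : Function.Injective φ := by
    rw [injective_iff_map_eq_zero]
    intro y hy
    apply hnd.1
    intro v
    have hle : Submodule.span E ((LinearMap.range G : Submodule F (Fin k → E)) : Set (Fin k → E))
        ≤ LinearMap.ker (β y) := by
      rw [Submodule.span_le]
      rintro _ ⟨x, rfl⟩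
      rw [SetLike.mem_coe, LinearMap.mem_ker, ← hφ, hy]
      simp
    exact hle (hspan v)
  refine ⟨LinearMap.range φ, by rw [LinearMap.finrank_range_of_inj hinj]; simp, ?_⟩
  intro D hDC hDr B hBC hBD hsup
  have hfr : ∀ A : Submodule E (Fin n → E), A ≤ LinearMap.range φ →
      (A.comap φ).map φ = A ∧ Module.finrank E (A.comap φ) = Module.finrank E A := by
    intro A hA
    have h1 : (A.comap φ).map φ = A := Submodule.map_comap_eq_self hA
    refine ⟨h1, ?_⟩
    conv_rhs => rw [← h1]
    exact (LinearEquiv.finrank_eq (Submodule.equivMapOfInjective φ hinj _))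
  obtain ⟨hD1, hD2⟩ := hfr D hDC
  obtain ⟨hB1, hB2⟩ := hfr B hBC
  have hVD := LinearMap.BilinForm.finrank_orthogonal hnd (D.comap φ)
  have hVB := LinearMap.BilinForm.finrank_orthogonal hnd (B.comap φ)
  have hle : β.orthogonal (D.comap φ) ≤ β.orthogonal (B.comap φ) := by
    rw [← hG (β.orthogonal (D.comap φ)) (by rw [hVD, hD2, hDr]), Submodule.span_le]
    rintro _ ⟨⟨x, rfl⟩, hx⟩
    have hx' : ∀ d ∈ D, ∑ j, x j • d j = 0 := by
      intro d hd
      obtain ⟨y, rfl⟩ := hDC hd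
      rw [hφ]
      exact (LinearMap.BilinForm.mem_orthogonal_iff.1 hx) y hd
    have hb := aux_support B D hsup x hx'
    rw [SetLike.mem_coe, LinearMap.BilinForm.mem_orthogonal_iff]
    intro y hy
    change β y (G x) = 0
    rw [← hφ]
    exact hb _ hy
  have heq := Submodule.eq_of_le_of_finrank_eq hle (by rw [hVD, hVB, hD2, hB2, hBD])
  have hBDeq : B = D := by
    rw [← hD1, ← hB1, ← LinearMap.BilinForm.orthogonal_orthogonal hnd hrefl (B.comap φ), ← heq,
      LinearMap.BilinForm.orthogonal_orthogonal hnd hrefl]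
  rw [hBDeq]
end

/-- Theorem 5.4: suppose `F` is finite; for `k ≥ r + 1` and
`n = mr + k(r+1) - r² - 2r`, there exists an `[n, k]` `r`-minimal code; in particular,
there is a cutting `r`-blocking set of `E^k` of `F`-dimension at most `n`, i.e.,
`ϖ_{E/F}(k, r) ≤ mr + k(r+1) - r² - 2r`. -/
theorem statement19 (F E : Type*) [Field F] [Field E] [Algebra F E] [Fintype F]
    [FiniteDimensional F E] (m : ℕ) (hm : Module.finrank F E = m)
    (k r : ℕ) (hkr : r + 1 ≤ k)
    (n : ℕ) (hn : n = m * r + k * (r + 1) - r ^ 2 - 2 * r) :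
    (∃ C : Submodule E (Fin n → E), Module.finrank E C = k ∧ IsRMinimal F E n C r) ∧
      ∃ U : Submodule F (Fin k → E),
        IsCuttingBlocking E (U : Set (Fin k → E)) r ∧ Module.finrank F U ≤ n := by
  obtain ⟨t, rfl⟩ : ∃ t, k = r + 1 + t := ⟨k - (r + 1), by omega⟩
  have hn' : n = Module.finrank F E * r + ((r + 1) * (r + 1 + t - r - 1) + 1) := by
    rw [hn, hm]
    have e1 : r + 1 + t - r - 1 = t := by omega
    rw [e1]
    have e2 : m * r + (r + 1 + t) * (r + 1) =
      m * r + ((r + 1) * t + 1) + r ^ 2 + 2 * r := by ring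
    omega
  obtain ⟨G, hG⟩ := aux_exists_good (F := F) (E := E) hkr hn' rfl
  have hc := aux_cutting hkr hn' G hG
  refine ⟨aux_code hkr G hc, LinearMap.range G, hc, ?_⟩
  have := LinearMap.finrank_range_le G
  simpa using this
end
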